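/- arXiv:2012.08411 — 4 statements merged into one kernel-verified Lean document; each statement's English description precedes it below -/
import Mathlib

section
/- Let T be a cyclic nilpotent linear operator on an N-dimensional vector space V over F_q and suppose N ≥ a_{1,1} ≥ a_{1,2} ≥ a_{2,1} ≥ a_{2,2} ≥ ⋯ ≥ a_{r,1} ≥ a_{r,2} ≥ 0, with the conventions a_{0,1} = a_{0,2} = N and a_{r+1,1} = a_{r+1,2} = 0. Then |[(a_{1,1},a_{1,2}),…,(a_{r,1},a_{r,2})]_T| = ∏_{i=1}^{r} [a_{i−1,1} − a_{i,1} choose a_{i,1} − a_{i,2}]_q [a_{i,1} − a_{i+1,1} choose a_{i,2} − a_{i+1,1}]_q q^{(a_{i,1} − a_{i,2})^2}. -/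
/-- The set `(a,b)_T` of subspaces `W` with `dim W = a` and `dim (W ∩ T⁻¹W) = b`. -/
def pairSet {F V : Type*} [Field F] [AddCommGroup V] [Module F V]
    (T : V →ₗ[F] V) (a b : ℕ) : Set (Submodule F V) :=
  {W | Module.finrank F W = a ∧ Module.finrank F ↥(W ⊓ W.comap T) = b}

/-- The set `[(a₁,₁,a₁,₂),…,(a_r,₁,a_r,₂)]_T`. -/
def tupleSet {F V : Type*} [Field F] [AddCommGroup V] [Module F V]
    (T : V →ₗ[F] V) (r : ℕ) (a : Fin r → ℕ × ℕ) : Set (Fin r → Submodule F V) :=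
  {W | (∀ i, W i ∈ pairSet T (a i).1 (a i).2) ∧
    ∀ (i : Fin r) (h : (i : ℕ) + 1 < r),
      W ⟨(i : ℕ) + 1, h⟩ ⊔ (W ⟨(i : ℕ) + 1, h⟩).map T ≤ W i}

/-- `T` is a cyclic operator: some vector `v` has `{v, Tv, …, T^{N-1}v}` spanning `V`,
where `N = dim V`. -/
def IsCyclicOp {F V : Type*} [Field F] [AddCommGroup V] [Module F V]
    (T : V →ₗ[F] V) : Prop :=
  ∃ v : V, Submodule.span F
    (Set.range fun i : Fin (Module.finrank F V) => (T ^ (i : ℕ)) v) = ⊤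

/-- Gaussian binomial coefficient `[n choose k]_q`. -/
def gaussNat (q : ℕ) : ℕ → ℕ → ℕ
  | _, 0 => 1
  | 0, _ + 1 => 0
  | n + 1, k + 1 => gaussNat q n k + q ^ (k + 1) * gaussNat q n (k + 1)

/-- Gaussian binomial coefficient `[n choose k]_q` with integer arguments; it is `0`
unless `0 ≤ k ≤ n`. -/
def gaussZ (q : ℕ) (n k : ℤ) : ℕ :=
  if 0 ≤ k ∧ k ≤ n then gaussNat q n.toNat k.toNat else 0

theorem gn_zero_right (q n : ℕ) : gaussNat q n 0 = 1 := by cases n <;> rfl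

theorem gn_gt (q : ℕ) : ∀ n k : ℕ, n < k → gaussNat q n k = 0
  | _, 0, h => absurd h (Nat.not_lt_zero _)
  | 0, _ + 1, _ => rfl
  | n + 1, k + 1, h => by
    rw [gaussNat, gn_gt q n k (by omega), gn_gt q n (k+1) (by omega)]; simp

def qn (q n : ℕ) : ℕ := ∑ i ∈ Finset.range n, q ^ i
def qf (q n : ℕ) : ℕ := ∏ i ∈ Finset.range n, qn q (i + 1)

theorem qn_add (q a b : ℕ) : qn q (a + b) = qn q a + q ^ a * qn q b := by
  simp [qn, Finset.sum_range_add, Finset.mul_sum, pow_add]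

theorem qf_succ (q n : ℕ) : qf q (n + 1) = qf q n * qn q (n + 1) := by
  simp [qf, Finset.prod_range_succ]

theorem qf_zero (q : ℕ) : qf q 0 = 1 := by simp [qf]

theorem qn_pos (q n : ℕ) : 0 < qn q (n + 1) := by
  simp [qn, Finset.sum_range_succ']

theorem qf_pos (q n : ℕ) : 0 < qf q n := Finset.prod_pos fun i _ => qn_pos q i

theorem gn_self (q n : ℕ) : gaussNat q n n = 1 := by
  induction n with
  | zero => rfl
  | succ n ih => rw [gaussNat, ih, gn_gt q n (n+1) (by omega)]; simp

theorem gn_fact (q : ℕ) : ∀ n k m : ℕ, k + m = n →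
    gaussNat q n k * (qf q k * qf q m) = qf q n := by
  intro n
  induction n with
  | zero => intro k m h; obtain ⟨rfl, rfl⟩ : k = 0 ∧ m = 0 := by omega
            simp [gn_zero_right, qf_zero]
  | succ n ih =>
    intro k m h
    rcases k with _ | k
    · obtain rfl : m = n + 1 := by omega
      simp [gn_zero_right, qf_zero]
    rcases m with _ | m
    · obtain rfl : k = n := by omega
      simp [gn_self, qf_zero]
    have e1 := ih k (m+1) (by omega)
    have e2 := ih (k+1) m (by omega)
    have e3 : qn q (n+1) = qn q (k+1) + q ^ (k+1) * qn q (m+1) := by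
      rw [← qn_add]; congr 1; omega
    rw [gaussNat, qf_succ q n, e3, mul_add, qf_succ q k, qf_succ q m]
    rw [qf_succ q m] at e1
    rw [qf_succ q k] at e2
    calc _ = (gaussNat q n k * (qf q k * (qf q m * qn q (m + 1)))) * qn q (k+1) +
          (gaussNat q n (k + 1) * (qf q k * qn q (k + 1) * qf q m)) * (q ^ (k+1) * qn q (m+1)) := by ring
      _ = _ := by rw [e1, e2]

theorem gn_symm (q k m : ℕ) : gaussNat q (k + m) k = gaussNat q (k + m) m := by
  have h1 := gn_fact q (k+m) k m rfl
  have h2 := gn_fact q (k+m) m k (by omega)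
  have := Nat.mul_pos (qf_pos q k) (qf_pos q m)
  rw [mul_comm (qf q m)] at h2
  exact Nat.eq_of_mul_eq_mul_right this (h1.trans h2.symm)

/-- second Pascal -/
theorem gn_pascal' (q n k m : ℕ) (h : k + m = n) :
    gaussNat q (n + 1) (k + 1) = gaussNat q n (k + 1) + q ^ m * gaussNat q n k := by
  subst h
  rcases m with _ | m
  · simp [gn_self, gn_gt]
  have h1 := gn_symm q (k+1) (m+1)
  have e : k + 1 + (m + 1) = k + (m+1) + 1 := by omega
  rw [e] at h1
  rw [h1, gaussNat]
  have h2 := gn_symm q k (m+1)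
  have h3 := gn_symm q (k+1) m
  have e : k + 1 + m = k + (m+1) := by omega
  rw [e] at h3
  rw [h2, h3]

theorem gn_vander (q : ℕ) (B : ℕ) : ∀ A k M : ℕ, A < M →
    ∑ m ∈ Finset.range M, gaussNat q A m * gaussNat q B (m + k) * q ^ (m * (m + k))
      = gaussNat q (A + B) (A + k) := by
  intro A
  induction A with
  | zero =>
    intro k M hM
    rw [Finset.sum_eq_single 0]
    · simp [gn_zero_right]
    · intro m _ hm; rw [gn_gt q 0 m (by omega)]; simp
    · simp; omega
  | succ A ih =>
    intro k M hM
    obtain ⟨M, rfl⟩ : ∃ M', M = M' + 1 := ⟨M - 1, by omega⟩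
    have e : A + 1 + B = A + B + 1 := by omega
    have e' : A + 1 + k = A + k + 1 := by omega
    rw [e, e', gaussNat, ← ih k (M+1) (by omega)]
    have e2 : A + k + 1 = A + (k + 1) := by omega
    rw [e2, ← ih (k+1) M (by omega), Finset.sum_range_succ', Finset.sum_range_succ']
    rw [Finset.mul_sum, add_right_comm, ← Finset.sum_add_distrib]
    simp only [gn_zero_right]
    congr 1
    apply Finset.sum_congr rfl
    intro m _
    by_cases hm : m ≤ A
    · obtain ⟨d, rfl⟩ := Nat.exists_eq_add_of_le hm
      rw [gn_pascal' q (m+d) m d rfl]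
      have : m + 1 + k = m + (k+1) := by omega
      rw [this]
      ring
    · rw [gn_gt q (A+1) (m+1) (by omega), gn_gt q A (m+1) (by omega), gn_gt q A m (by omega)]
      simp

theorem gn_vander0 (q A B : ℕ) : 
    ∑ m ∈ Finset.range (A + 1), gaussNat q A m * gaussNat q B m * q ^ (m ^ 2)
      = gaussNat q (A + B) A := by
  have := gn_vander q B A 0 (A+1) (by omega)
  simpa [pow_two] using this

theorem gn_mul (q A s n : ℕ) (hn : n ≤ s) (hs : s ≤ A) :
    gaussNat q A n * gaussNat q (A - n) (s - n) = gaussNat q A s * gaussNat q s n := by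
  obtain ⟨d, rfl⟩ := Nat.exists_eq_add_of_le hn
  obtain ⟨e, rfl⟩ := Nat.exists_eq_add_of_le hs
  have h1 := gn_fact q (n + d + e) n (d+e) (by omega)
  have h2 := gn_fact q (d+e) d e (by omega)
  have h3 := gn_fact q (n + d + e) (n+d) e (by omega)
  have h4 := gn_fact q (n+d) n d (by omega)
  have e1 : n + d + e - n = d + e := by omega
  have e2 : n + d - n = d := by omega
  rw [e1, e2]
  have hp : 0 < qf q n * qf q d * qf q e := by
    have := qf_pos q n; have := qf_pos q d; have := qf_pos q e; positivity
  apply Nat.eq_of_mul_eq_mul_right hp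
  calc _ = gaussNat q (n + d + e) n * (qf q n * (gaussNat q (d + e) d * (qf q d * qf q e))) := by ring
    _ = gaussNat q (n + d + e) (n+d) * ((gaussNat q (n + d) n * (qf q n * qf q d)) * qf q e) := by
      rw [h2, h1, h4, h3]
    _ = _ := by ring

theorem gz_nat (q n k : ℕ) : gaussZ q n k = gaussNat q n k := by
  unfold gaussZ
  split_ifs with h
  · simp
  · rw [gn_gt]; omega

theorem gz_eq (q : ℕ) (n k : ℤ) (n' k' : ℕ) (hn : n = n') (hk : k = k') :
    gaussZ q n k = gaussNat q n' k' := by subst hn hk; exact gz_nat q n' k'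

theorem gz_zero (q : ℕ) (n k : ℤ) (h : k < 0 ∨ n < k) : gaussZ q n k = 0 := by
  unfold gaussZ; rw [if_neg]; omega

/-- inner sum, left side -/
theorem inner_left (q N p a u c : ℕ) (h1 : c ≤ u) (h2 : u ≤ a) (h3 : a ≤ p) (h4 : p ≤ N) :
    ∑ j ∈ Finset.range (N + 1), gaussZ q ((p:ℤ) - a) ((a:ℤ) - j) * gaussZ q ((a:ℤ) - c) ((j:ℤ) - c)
      * q ^ ((a - j) ^ 2) * gaussZ q ((j:ℤ) - c) ((u:ℤ) - c)
    = gaussNat q (a - c) (a - u) * gaussNat q (p - u) (a - u) := by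
  obtain ⟨t, rfl⟩ := Nat.exists_eq_add_of_le h1
  obtain ⟨s, rfl⟩ := Nat.exists_eq_add_of_le h2
  obtain ⟨d, rfl⟩ := Nat.exists_eq_add_of_le h3
  have e1 : c + t + s - c = s + t := by omega
  have e2 : c + t + s - (c + t) = s := by omega
  have e3 : c + t + s + d - (c + t) = s + d := by omega
  rw [e1, e2, e3, ← gn_vander0 q s d, Finset.mul_sum]
  rw [← Finset.sum_subset (s₁ := (Finset.range (s+1)).image (fun m => c + t + s - m))]
  · rw [Finset.sum_image]
    · apply Finset.sum_congr rfl
      intro m hm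
      have hm : m ≤ s := by simpa [Nat.lt_succ_iff] using hm
      rw [gz_eq q _ _ d m (by push_cast; ring) (by omega),
        gz_eq q _ _ (s+t) (s + t - m) (by push_cast; ring) (by omega),
        gz_eq q _ _ (s+t-m) t (by omega) (by push_cast; ring)]
      have e : c + t + s - (c + t + s - m) = m := by omega
      rw [e]
      have hh := gn_mul q (s+t) s m hm (by omega)
      have hA := gn_symm q m (s + t - m)
      rw [show m + (s + t - m) = s + t by omega] at hA
      have hB := gn_symm q t (s - m)
      rw [show t + (s - m) = s + t - m by omega] at hB
      rw [← hA, hB]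
      calc _ = (gaussNat q (s + t) m * gaussNat q (s + t - m) (s - m)) * gaussNat q d m * q ^ m^2 := by ring
        _ = _ := by rw [hh]; ring
    · intro x hx y hy hxy
      simp only [Finset.coe_range, Set.mem_Iio] at hx hy
      simp only at hxy
      omega
  · intro x hx
    simp only [Finset.mem_image, Finset.mem_range] at hx ⊢
    omega
  · intro x hx hx'
    simp only [Finset.mem_image, Finset.mem_range, not_exists, not_and] at hx hx'
    have : x < c + t ∨ c + t + s < x := by
      by_contra hcon
      exact hx' (c + t + s - x) (by omega) (by omega)
    rcases this with h | h
    · rw [gz_zero q ((x:ℤ) - c)]; · simp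
      omega
    · rw [gz_zero q _ (((c + t + s : ℕ) :ℤ) - x)]; · simp
      omega

/-- inner sum, right side -/
theorem inner_right (q N p a u c : ℕ) (h1 : c ≤ u) (h2 : u ≤ a) (h3 : a ≤ p) (h4 : p ≤ N) :
    ∑ v ∈ Finset.range (N + 1), gaussZ q ((p:ℤ) - u) ((u:ℤ) - v) * gaussZ q ((u:ℤ) - c) ((v:ℤ) - c)
      * q ^ ((u - v) ^ 2) * gaussZ q ((p:ℤ) - (2 * u - v)) ((a:ℤ) - (2 * u - v))
    = gaussNat q (p - u) (a - u) * gaussNat q (a - c) (a - u) := by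
  obtain ⟨t, rfl⟩ := Nat.exists_eq_add_of_le h1
  obtain ⟨s, rfl⟩ := Nat.exists_eq_add_of_le h2
  obtain ⟨d, rfl⟩ := Nat.exists_eq_add_of_le h3
  have e1 : c + t + s - c = s + t := by omega
  have e2 : c + t + s - (c + t) = s := by omega
  have e3 : c + t + s + d - (c + t) = s + d := by omega
  rw [e1, e2, e3]
  have hV := gn_symm q s t
  have hW := gn_vander0 q t s
  rw [show t + s = s + t by omega] at hW
  rw [hV, ← hW, Finset.mul_sum]
  rw [← Finset.sum_subset (s₁ := (Finset.range (t+1)).image (fun m => c + t - m))]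
  · rw [Finset.sum_image]
    · apply Finset.sum_congr rfl
      intro m hm
      have hm : m ≤ t := by simpa [Nat.lt_succ_iff] using hm
      rw [gz_eq q _ _ (s+d) m (by push_cast; ring) (by omega),
        gz_eq q _ _ t (t - m) (by push_cast; ring) (by omega)]
      have e : c + t - (c + t - m) = m := by omega
      rw [e]
      have hA := gn_symm q m (t - m)
      rw [show m + (t - m) = t by omega] at hA
      rw [← hA]
      by_cases hms : m ≤ s
      · rw [gz_eq q _ _ (s+d-m) (s-m) (by omega) (by omega)]
        have hh := gn_mul q (s+d) s m hms (by omega)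
        calc _ = (gaussNat q (s + d) m * gaussNat q (s + d - m) (s - m)) * gaussNat q t m * q ^ m^2 := by ring
          _ = _ := by rw [hh]; ring
      · rw [gn_gt q s m (by omega), gz_zero q _ (_ - (2 * _ - _))]
        · simp
        · omega
    · intro x hx y hy hxy
      simp only [Finset.coe_range, Set.mem_Iio] at hx hy
      simp only at hxy
      omega
  · intro x hx
    simp only [Finset.mem_image, Finset.mem_range] at hx ⊢
    omega
  · intro x hx hx'
    simp only [Finset.mem_image, Finset.mem_range, not_exists, not_and] at hx hx'
    have : x < c ∨ c + t < x := by
      by_contra hcon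
      exact hx' (c + t - x) (by omega) (by omega)
    rcases this with h | h
    · rw [gz_zero q _ ((x:ℤ) - c)]; · simp
      omega
    · rw [gz_zero q _ (((c + t : ℕ) :ℤ) - x)]; · simp
      omega

theorem gn_q (q k m : ℕ) : (gaussNat q (k+m) k : ℚ) = qf q (k+m) / (qf q k * qf q m) := by
  have h := gn_fact q (k+m) k m rfl
  have h1 := qf_pos q k
  have h2 := qf_pos q m
  rw [eq_div_iff (by positivity)]
  exact_mod_cast h

theorem gn_q' (q n k : ℕ) (h : k ≤ n) : (gaussNat q n k : ℚ) = qf q n / (qf q k * qf q (n - k)) := by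
  obtain ⟨d, rfl⟩ := Nat.exists_eq_add_of_le h
  rw [gn_q, Nat.add_sub_cancel_left]

theorem telescope (q r : ℕ) (a b : ℕ → ℕ) (h0 : a 0 = b 0) (hr : a (r+1) = b (r+1))
    (h1 : ∀ i ≤ r, b i ≤ a i) (h2 : ∀ i ≤ r, a (i+1) ≤ b i) :
    ∏ i ∈ Finset.range r, (gaussNat q (a (i+1) - a (i+2)) (a (i+1) - b (i+1)) *
        gaussNat q (a i - b (i+1)) (a (i+1) - b (i+1))) =
    ∏ i ∈ Finset.range r, (gaussNat q (b i - b (i+1)) (a (i+1) - b (i+1)) *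
        gaussNat q (a (i+1) - b (i+2)) (a (i+1) - b (i+1))) := by
  have hp := qf_pos q
  let Y : ℕ → ℚ := fun i => (qf q (a i - a (i+1)) * qf q (b i - b (i+1))) /
    (qf q (b i - a (i+1)) * qf q (a i - b (i+1)))
  have hY : ∀ i, Y i ≠ 0 := fun i => by
    have := hp (a i - a (i+1)); have := hp (b i - b (i+1))
    have := hp (b i - a (i+1)); have := hp (a i - b (i+1))
    simp only [Y]; positivity
  have key : ∀ k ≤ r, 
    (∏ i ∈ Finset.range k, ((gaussNat q (a (i+1) - a (i+2)) (a (i+1) - b (i+1)) : ℚ) *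
        gaussNat q (a i - b (i+1)) (a (i+1) - b (i+1)))) * Y 0 =
    (∏ i ∈ Finset.range k, ((gaussNat q (b i - b (i+1)) (a (i+1) - b (i+1)) : ℚ) *
        gaussNat q (a (i+1) - b (i+2)) (a (i+1) - b (i+1)))) * Y k := by
    intro k
    induction k with
    | zero => intro _; simp
    | succ k ih =>
      intro hk
      rw [Finset.prod_range_succ, Finset.prod_range_succ, mul_right_comm, ih (by omega),
        mul_assoc, mul_assoc]
      congr 1
      have l1 := h1 k (by omega)
      have l2 := h2 k (by omega)
      have l3 := h1 (k+1) (by omega)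
      have l4 := h2 (k+1) (by omega)
      have l5 : b (k+2) ≤ a (k+2) := by
        by_cases h : k + 2 ≤ r
        · exact h1 _ h
        · have : k + 2 = r + 1 := by omega
          rw [this, hr]
      have l4' : a (k+2) ≤ b (k+1) := l4
      rw [gn_q' q _ _ (by omega), gn_q' q _ _ (by omega), gn_q' q _ _ (by omega), gn_q' q _ _ (by omega)]
      rw [show a (k + 1) - a (k + 2) - (a (k + 1) - b (k + 1)) = b (k+1) - a (k+2) by omega,
        show a k - b (k + 1) - (a (k + 1) - b (k + 1)) = a k - a (k+1) by omega,
        show b k - b (k + 1) - (a (k + 1) - b (k + 1)) = b k - a (k+1) by omega,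
        show a (k + 1) - b (k + 2) - (a (k + 1) - b (k + 1)) = b (k+1) - b (k+2) by omega]
      simp only [Y]
      have n : ∀ x, (qf q x : ℚ) ≠ 0 := fun x => by have := hp x; positivity
      have n1 := n (a (k+1) - a (k+1+1)); have n2 := n (b (k+1) - b (k+1+1))
      have n3 := n (b (k+1) - a (k+1+1)); have n4 := n (a (k+1) - b (k+1+1))
      have n5 := n (a k - a (k+1)); have n6 := n (b k - b (k+1))
      have n7 := n (b k - a (k+1)); have n8 := n (a k - b (k+1))
      have n9 := n (a (k+1) - b (k+1))
      simp only [add_assoc, Nat.reduceAdd] at *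
      field_simp
  have k0 := key r le_rfl
  have y0 : Y 0 = Y r := by
    have e1 : Y 0 = 1 := by
      simp only [Y]; rw [div_eq_one_iff_eq]
      · rw [h0]
      · have := hp (b 0 - a (0+1)); have := hp (a 0 - b (0+1)); positivity
    have e2 : Y r = 1 := by
      simp only [Y]; rw [div_eq_one_iff_eq]
      · rw [hr]; ring
      · have := hp (b r - a (r+1)); have := hp (a r - b (r+1)); positivity
    rw [e1, e2]
  rw [y0] at k0
  have := mul_right_cancel₀ (hY r) k0
  exact_mod_cast this

def qc (q k : ℕ) : ℤ := ∏ i ∈ Finset.range k, ((q:ℤ) ^ i * (q - 1))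

theorem qn_geom (q n : ℕ) : ((q:ℤ) - 1) * qn q n = q ^ n - 1 := by
  unfold qn; push_cast; rw [mul_comm]; exact geom_sum_mul _ _

theorem P_fact (q : ℕ) : ∀ k m : ℕ,
    (∏ i ∈ Finset.range k, ((q:ℤ) ^ (k + m) - q ^ i)) * qf q m = qc q k * qf q (k + m) := by
  intro k
  induction k with
  | zero => intro m; simp [qc]
  | succ k ih =>
    intro m
    have h := ih (m+1)
    have e : k + (m + 1) = k + 1 + m := by omega
    rw [e] at h
    rw [Finset.prod_range_succ, qc, Finset.prod_range_succ, ← qc]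
    have h2 : (q:ℤ) ^ (k + 1 + m) - q ^ k = q ^ k * ((q - 1) * qn q (m+1)) := by
      rw [qn_geom]; ring
    rw [h2]
    rw [qf_succ] at h
    push_cast at h
    linear_combination (q:ℤ)^k * (q - 1) * h

theorem gn_prod (q k n : ℕ) (hk : k ≤ n) :
    (gaussNat q n k : ℤ) * ∏ i ∈ Finset.range k, ((q:ℤ) ^ k - q ^ i)
      = ∏ i ∈ Finset.range k, ((q:ℤ) ^ n - q ^ i) := by
  obtain ⟨m, rfl⟩ := Nat.exists_eq_add_of_le hk
  have h1 := P_fact q k m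
  have h2 := P_fact q k 0
  have h3 := gn_fact q (k+m) k m rfl
  have h4 := qf_pos q m
  simp only [add_zero, qf_zero, Nat.cast_one, mul_one] at h2
  have h4' : (qf q m : ℤ) ≠ 0 := by positivity
  apply mul_right_cancel₀ h4'
  rw [h1, h2, ← h3]
  push_cast; ring

open Module in
noncomputable def sigEquiv (F V : Type*) [Field F] [AddCommGroup V] [Module F V]
    [FiniteDimensional F V] (k : ℕ) :
    (Σ W : {W : Submodule F V // finrank F W = k}, {s : Fin k → W.1 // LinearIndependent F s}) ≃
      {s : Fin k → V // LinearIndependent F s} := by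
  have sp : ∀ (W : Submodule F V) (_ : finrank F W = k) (s : Fin k → W), LinearIndependent F s →
      Submodule.span F (Set.range fun i => (s i : V)) = W := by
    intro W hW s hs
    have h := hs.span_eq_top_of_card_eq_finrank' (by simp [hW])
    have e : (Set.range fun i => (s i : V)) = W.subtype '' Set.range s := by
      rw [← Set.range_comp]; rfl
    rw [e, ← Submodule.map_span, h, Submodule.map_subtype_top]
  refine Equiv.ofBijective
    (fun x => ⟨fun i => (x.2.1 i : V), x.2.2.map' x.1.1.subtype (Submodule.ker_subtype _)⟩) ⟨?_, ?_⟩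
  · rintro ⟨⟨W, hW⟩, ⟨s, hs⟩⟩ ⟨⟨W', hW'⟩, ⟨s', hs'⟩⟩ h
    replace h := congrArg Subtype.val h
    simp only at h
    have h1 := sp W hW s hs
    have h2 := sp W' hW' s' hs'
    rw [h] at h1
    obtain rfl := h1.symm.trans h2
    have : s = s' := by
      funext i; exact Subtype.ext (congrFun h i)
    subst this; rfl
  · rintro ⟨s, hs⟩
    refine ⟨⟨⟨Submodule.span F (Set.range s), ?_⟩,
      ⟨fun i => ⟨s i, Submodule.subset_span ⟨i, rfl⟩⟩, ?_⟩⟩, ?_⟩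
    · simpa using finrank_span_eq_card hs
    · exact LinearIndependent.of_comp (Submodule.subtype _) hs
    · rfl

open Module in
theorem card_subspaces (F V : Type*) [Field F] [Fintype F] [AddCommGroup V] [Module F V]
    [FiniteDimensional F V] (k : ℕ) :
    Nat.card {W : Submodule F V // finrank F W = k} = gaussNat (Fintype.card F) (finrank F V) k := by
  have : Finite V := Module.finite_of_finite F
  by_cases hk : k ≤ finrank F V
  swap
  · rw [gn_gt _ _ _ (by omega)]
    have : IsEmpty {W : Submodule F V // finrank F W = k} :=
      ⟨fun W => hk (by rw [← W.2]; exact Submodule.finrank_le _)⟩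
    simp
  have h1 := Nat.card_congr (sigEquiv F V k)
  rw [card_linearIndependent hk] at h1
  have : Fintype {W : Submodule F V // finrank F W = k} := Fintype.ofFinite _
  rw [Nat.card_sigma] at h1
  have h2 : ∀ W : {W : Submodule F V // finrank F W = k},
      Nat.card {s : Fin k → W.1 // LinearIndependent F s} = 
        ∏ i : Fin k, (Fintype.card F ^ k - Fintype.card F ^ i.val) := by
    intro W
    rw [card_linearIndependent (by rw [W.2]), W.2]
  simp only [h2, Finset.sum_const, Finset.card_univ, smul_eq_mul] at h1
  rw [Nat.card_eq_fintype_card]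
  have hq : 1 < Fintype.card F := Fintype.one_lt_card
  have cst : ∀ n, k ≤ n → ((∏ i : Fin k, (Fintype.card F ^ n - Fintype.card F ^ i.val) : ℕ) : ℤ)
      = ∏ i ∈ Finset.range k, ((Fintype.card F:ℤ) ^ n - (Fintype.card F:ℤ) ^ i) := by
    intro n hn
    rw [← Fin.prod_univ_eq_prod_range (fun i => ((Fintype.card F:ℤ) ^ n - (Fintype.card F:ℤ) ^ i))]
    push_cast
    apply Finset.prod_congr rfl
    intro i _
    rw [Nat.cast_sub]
    · push_cast; rfl
    · exact Nat.pow_le_pow_right (by omega) (by omega)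
  have h3 := gn_prod (Fintype.card F) k (finrank F V) hk
  rw [← cst _ hk, ← cst _ le_rfl, ← h1] at h3
  have h4 : 0 < ∏ i : Fin k, (Fintype.card F ^ k - Fintype.card F ^ i.val) := by
    apply Finset.prod_pos
    intro i _
    have := Nat.pow_lt_pow_right hq i.2
    omega
  have h5 : gaussNat (Fintype.card F) (finrank F V) k * (∏ i : Fin k, (Fintype.card F ^ k - Fintype.card F ^ i.val)) = Fintype.card { W : Submodule F V // finrank F W = k } * (∏ i : Fin k, (Fintype.card F ^ k - Fintype.card F ^ i.val)) := by
    exact_mod_cast h3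
  exact (Nat.eq_of_mul_eq_mul_right h4 h5).symm

open Module in
/-- counting an interval -/
theorem card_interval (F V : Type*) [Field F] [Fintype F] [AddCommGroup V] [Module F V]
    [FiniteDimensional F V] (A B : Submodule F V) (h : A ≤ B) (u : ℕ) :
    Nat.card {W : Submodule F V // finrank F W = u ∧ A ≤ W ∧ W ≤ B} =
      gaussZ (Fintype.card F) ((finrank F B : ℤ) - finrank F A) ((u : ℤ) - finrank F A) := by
  have hfin : Finite V := Module.finite_of_finite F
  by_cases hu : finrank F A ≤ u
  swap
  · rw [gz_zero _ _ _ (by omega)]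
    have : IsEmpty {W : Submodule F V // finrank F W = u ∧ A ≤ W ∧ W ≤ B} :=
      ⟨fun W => hu (by rw [← W.2.1]; exact Submodule.finrank_mono W.2.2.1)⟩
    simp
  let A' : Submodule F B := A.comap B.subtype
  have hA' : finrank F A' = finrank F A :=
    LinearEquiv.finrank_eq (Submodule.comapSubtypeEquivOfLe h)
  have hquot : finrank F (B ⧸ A') + finrank F A = finrank F B := by
    rw [← hA']; exact Submodule.finrank_quotient_add_finrank A'
  rw [gz_eq _ _ _ (finrank F (B ⧸ A')) (u - finrank F A) (by omega) (by omega), ← card_subspaces]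
  symm
  have fr : ∀ X : Submodule F (B ⧸ A'),
      finrank F ((X.comap A'.mkQ).map B.subtype) = finrank F X + finrank F A := by
    intro X
    rw [Submodule.finrank_map_subtype_eq]
    have h1 := Submodule.finrank_quotient_add_finrank (X.comap A'.mkQ)
    have h2 := Submodule.finrank_quotient_add_finrank X
    have h3 := (Submodule.quotientQuotientEquivQuotient A' (X.comap A'.mkQ)
      (by intro x hx; simp [(Submodule.Quotient.mk_eq_zero A').mpr hx])).finrank_eq
    rw [Submodule.map_comap_eq_of_surjective (Submodule.mkQ_surjective _)] at h3
    omega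
  refine Nat.card_congr (Equiv.ofBijective
    (fun X => ⟨(X.1.comap A'.mkQ).map B.subtype, ?_, ?_, ?_⟩) ⟨?_, ?_⟩)
  · rw [fr, X.2]; omega
  · intro x hx
    refine ⟨⟨x, h hx⟩, ?_, rfl⟩
    have : A'.mkQ ⟨x, h hx⟩ = 0 := by
      rw [Submodule.mkQ_apply, Submodule.Quotient.mk_eq_zero]; exact hx
    simp only [Submodule.comap_coe, Set.mem_preimage, SetLike.mem_coe, this, zero_mem]
  · exact Submodule.map_subtype_le _ _
  · rintro ⟨X, hX⟩ ⟨Y, hY⟩ hXY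
    simp only [Subtype.mk.injEq] at hXY
    have := Submodule.map_injective_of_injective (B.injective_subtype) hXY
    exact Subtype.ext (Submodule.comap_injective_of_surjective (Submodule.mkQ_surjective _) this)
  · rintro ⟨W, hW, hAW, hWB⟩
    have e : (((W.comap B.subtype).map A'.mkQ).comap A'.mkQ).map B.subtype = W := by
      rw [Submodule.comap_map_mkQ, sup_eq_right.mpr (Submodule.comap_mono hAW),
        Submodule.map_comap_subtype]
      exact inf_eq_right.mpr hWB
    refine ⟨⟨(W.comap B.subtype).map A'.mkQ, ?_⟩, Subtype.ext e⟩
    have := fr ((W.comap B.subtype).map A'.mkQ)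
    rw [e] at this
    omega

open Module in
theorem card_interval_zero (F V : Type*) [Field F] [AddCommGroup V] [Module F V]
    (A B : Submodule F V) (h : ¬ A ≤ B) (u : ℕ) :
    Nat.card {W : Submodule F V // finrank F W = u ∧ A ≤ W ∧ W ≤ B} = 0 := by
  have : IsEmpty {W : Submodule F V // finrank F W = u ∧ A ≤ W ∧ W ≤ B} :=
      ⟨fun W => h (W.2.2.1.trans W.2.2.2)⟩
  simp

open Module in
theorem ker_pow_dim (F V : Type*) [Field F] [AddCommGroup V] [Module F V]
    [FiniteDimensional F V] (T : V →ₗ[F] V) (hcyc : IsCyclicOp T) (hnil : T ^ (finrank F V) = 0)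
    (k : ℕ) (hk : k ≤ finrank F V) : finrank F (LinearMap.ker (T ^ k)) = k := by
  obtain ⟨v, hv⟩ := hcyc
  set N := finrank F V with hN
  -- range of T is codimension at most one
  have hsup : ∀ x : V, ∃ c : F, x - c • v ∈ LinearMap.range T := by
    intro x
    have hx : x ∈ Submodule.span F (Set.range fun i : Fin N => (T ^ (i : ℕ)) v) := by
      rw [hv]; trivial
    induction hx using Submodule.span_induction with
    | mem x h =>
      obtain ⟨i, rfl⟩ := h
      simp only
      rcases hi : (i : ℕ) with _ | j
      · exact ⟨1, by simp⟩
      · refine ⟨0, ⟨(T ^ j) v, ?_⟩⟩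
        rw [pow_succ']; simp
    | zero => exact ⟨0, by simp⟩
    | add x y _ _ hx hy =>
      obtain ⟨c, hc⟩ := hx
      obtain ⟨d, hd⟩ := hy
      refine ⟨c + d, ?_⟩
      have := add_mem hc hd
      convert this using 1
      module
    | smul a x _ hx =>
      obtain ⟨c, hc⟩ := hx
      refine ⟨a * c, ?_⟩
      have := Submodule.smul_mem _ a hc
      convert this using 1
      module
  have hker : finrank F (LinearMap.ker T) ≤ 1 := by
    have h1 := LinearMap.finrank_range_add_finrank_ker T
    have h2 : LinearMap.range T ⊔ Submodule.span F {v} = ⊤ := by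
      rw [eq_top_iff]
      intro x _
      obtain ⟨c, hc⟩ := hsup x
      have : x = (x - c • v) + c • v := by abel
      rw [this]
      exact Submodule.add_mem_sup hc (Submodule.smul_mem _ _ (Submodule.mem_span_singleton_self v))
    have h3 := Submodule.finrank_add_le_finrank_add_finrank (LinearMap.range T) (Submodule.span F {v})
    rw [h2, finrank_top] at h3
    have h4 : finrank F (Submodule.span F {v}) ≤ 1 := by
      have := finrank_span_le_card (R := F) ({v} : Set V)
      simpa using this
    omega
  have step : ∀ j, finrank F (LinearMap.ker (T ^ (j+1))) ≤ finrank F (LinearMap.ker (T ^ j)) + 1 := by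
    intro j
    let g : LinearMap.ker (T ^ (j+1)) →ₗ[F] LinearMap.ker T :=
      ((T ^ j).comp (LinearMap.ker (T ^ (j+1))).subtype).codRestrict _ (by
        intro x
        have h : (T ^ (j+1)) (x : V) = 0 := x.2
        have h' : ∀ y : V, (T ^ (j+1)) y = T ((T ^ j) y) := fun y => by rw [pow_succ']; rfl
        rw [LinearMap.mem_ker]
        exact (h' x).symm.trans h)
    have h1 := LinearMap.finrank_range_add_finrank_ker g
    have h2 : finrank F (LinearMap.range g) ≤ 1 := (Submodule.finrank_le _).trans hker
    have h3 : finrank F (LinearMap.ker g) ≤ finrank F (LinearMap.ker (T ^ j)) := by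
      rw [← Submodule.finrank_map_subtype_eq]
      apply Submodule.finrank_mono
      rintro _ ⟨x, hx, rfl⟩
      have : g x = 0 := hx
      have := congrArg Subtype.val this
      simpa [g] using this
    omega
  have up : ∀ j, finrank F (LinearMap.ker (T ^ j)) ≤ j := by
    intro j
    induction j with
    | zero =>
      have : LinearMap.ker (T ^ 0) = ⊥ := by rw [pow_zero]; exact LinearMap.ker_id
      rw [this]; simp
    | succ j ih => have := step j; omega
  have down : ∀ d, finrank F (LinearMap.ker (T ^ (k + d))) ≤ finrank F (LinearMap.ker (T ^ k)) + d := by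
    intro d
    induction d with
    | zero => simp
    | succ d ih => have := step (k+d); rw [← add_assoc]; omega
  have h1 := down (N - k)
  rw [show k + (N - k) = N by omega, hnil, LinearMap.ker_zero, finrank_top] at h1
  have := up k
  omega

open Module in
theorem inv_eq_ker (F V : Type*) [Field F] [AddCommGroup V] [Module F V]
    [FiniteDimensional F V] (T : V →ₗ[F] V) (hcyc : IsCyclicOp T) (hnil : T ^ (finrank F V) = 0)
    (W : Submodule F V) (hW : W ≤ W.comap T) :
    W = LinearMap.ker (T ^ (finrank F W)) := by
  have hd := ker_pow_dim F V T hcyc hnil (finrank F W) (Submodule.finrank_le _)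
  apply Submodule.eq_of_le_of_finrank_eq _ hd.symm
  let S : Module.End F W := T.restrict hW
  have hS : ∀ (k : ℕ) (w : W), ((S ^ k) w : V) = (T ^ k) w := by
    intro k
    induction k with
    | zero => intro w; simp
    | succ k ih => intro w; rw [pow_succ, pow_succ]; simp [ih, S]
  have hSn : S ^ (finrank F V) = 0 := by
    ext w; rw [hS, hnil]; simp
  have h1 := Module.End.ker_pow_le_ker_pow_finrank S (finrank F V)
  rw [hSn] at h1
  intro w hw
  have : (⟨w, hw⟩ : W) ∈ LinearMap.ker (S ^ finrank F W) := h1 (by simp)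
  rw [LinearMap.mem_ker] at this ⊢
  have h2 := hS (finrank F W) ⟨w, hw⟩
  rw [this] at h2
  simpa using h2.symm

def xtd {α : Type*} (t b : α) {r : ℕ} (x : Fin r → α) (n : ℕ) : α :=
  if n = 0 then t else if h : n - 1 < r then x ⟨n - 1, h⟩ else b

@[simp] theorem xtd_zero {α : Type*} (t b : α) {r : ℕ} (x : Fin r → α) : xtd t b x 0 = t := by
  simp [xtd]

@[simp] theorem xtd_succ {α : Type*} (t b : α) {r : ℕ} (x : Fin r → α) (i : Fin r) :
    xtd t b x ((i:ℕ) + 1) = x i := by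
  simp [xtd]

@[simp] theorem xtd_last {α : Type*} (t b : α) {r : ℕ} (x : Fin r → α) :
    xtd t b x (r + 1) = b := by
  simp [xtd]

theorem xtd_lt {α : Type*} (t b : α) {r : ℕ} (x : Fin r → α) (n : ℕ) (h : n < r) :
    xtd t b x (n + 1) = x ⟨n, h⟩ := by
  simp [xtd, h]

theorem xtd_map {α β : Type*} (f : α → β) (t b : α) {r : ℕ} (x : Fin r → α) (n : ℕ) :
    f (xtd t b x n) = xtd (f t) (f b) (fun i => f (x i)) n := by
  unfold xtd; split_ifs <;> rfl

open Module in
theorem xtd_finrank {F V : Type*} [Field F] [AddCommGroup V] [Module F V] {r : ℕ}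
    (W : Fin r → Submodule F V) (n : ℕ) :
    finrank F (xtd (⊤ : Submodule F V) ⊥ W n : Submodule F V) = xtd (finrank F V) 0 (fun i => finrank F (W i)) n := by
  rw [xtd_map (fun X : Submodule F V => finrank F X)]; simp

theorem mem_tuple {F V : Type*} [Field F] [AddCommGroup V] [Module F V] (T : V →ₗ[F] V) {r : ℕ}
    (a b : Fin r → ℕ) (W : Fin r → Submodule F V) :
    W ∈ tupleSet T r (fun i => (a i, b i)) ↔
      (∀ i, Module.finrank F (W i) = a i) ∧
      (∀ i, Module.finrank F ↥(W i ⊓ (W i).comap T) = b i) ∧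
      ∀ i : Fin r, xtd ⊤ ⊥ W ((i:ℕ) + 2) ≤ W i ⊓ (W i).comap T := by
  unfold tupleSet pairSet
  simp only [Set.mem_ofPred_eq]
  rw [forall_and, and_assoc]
  apply and_congr_right; intro _
  apply and_congr_right; intro _
  constructor
  · intro h i
    by_cases hi : (i:ℕ) + 1 < r
    · have := h i hi
      rw [xtd_lt _ _ _ _ hi]
      rw [sup_le_iff, Submodule.map_le_iff_le_comap] at this
      exact le_inf this.1 this.2
    · have : (i:ℕ) + 2 = r + 1 := by omega
      rw [this, xtd_last]; exact bot_le
  · intro h i hi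
    have := h i
    rw [xtd_lt _ _ _ _ hi] at this
    rw [sup_le_iff, Submodule.map_le_iff_le_comap]
    exact le_inf_iff.mp this

/-- the interlacing condition -/
theorem interlace {α : Type*} [PartialOrder α] [BoundedOrder α] {r : ℕ} (W U : Fin r → α) :
    (∀ i : Fin r, xtd ⊤ ⊥ W ((i:ℕ) + 2) ≤ U i) ↔ (∀ i : Fin r, W i ≤ xtd ⊤ ⊥ U (i:ℕ)) := by
  have e1 : (∀ n ≤ r, xtd ⊤ ⊥ W (n+1) ≤ xtd ⊤ ⊥ U n) ↔ (∀ i : Fin r, xtd ⊤ ⊥ W ((i:ℕ) + 2) ≤ U i) := by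
    constructor
    · intro h i
      have := h (i+1) (by omega)
      rwa [xtd_succ] at this
    · intro h n hn
      rcases n with _ | n
      · simp
      · rw [xtd_lt _ _ _ n (by omega)]; exact h ⟨n, by omega⟩
  have e2 : (∀ n ≤ r, xtd ⊤ ⊥ W (n+1) ≤ xtd ⊤ ⊥ U n) ↔ (∀ i : Fin r, W i ≤ xtd ⊤ ⊥ U (i:ℕ)) := by
    constructor
    · intro h i
      have := h i (by omega)
      rwa [xtd_succ] at this
    · intro h n hn
      by_cases hn' : n < r
      · rw [xtd_lt _ _ _ n hn']; exact h ⟨n, hn'⟩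
      · obtain rfl : n = r := by omega
        simp
  rw [← e1, e2]

open Module in
theorem finrank_sup_map {F V : Type*} [Field F] [AddCommGroup V] [Module F V]
    [FiniteDimensional F V] (T : V →ₗ[F] V) (U : Submodule F V) :
    finrank F ↥(U ⊔ U.map T) + finrank F ↥(U ⊓ U.comap T) = 2 * finrank F U := by
  let g : U →ₗ[F] (V ⧸ U) := (U.mkQ.comp T).comp U.subtype
  have h1 := LinearMap.finrank_range_add_finrank_ker g
  have h2 : finrank F (LinearMap.ker g) = finrank F ↥(U ⊓ U.comap T) := by
    rw [← Submodule.finrank_map_subtype_eq]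
    have : (LinearMap.ker g).map U.subtype = U ⊓ U.comap T := by
      ext x
      simp [g, Submodule.Quotient.mk_eq_zero, and_comm]
    rw [this]
  have h3 : LinearMap.range g = (U ⊔ U.map T).map U.mkQ := by
    rw [Submodule.map_sup, Submodule.mkQ_map_self, bot_sup_eq, LinearMap.range_comp,
      Submodule.range_subtype, Submodule.map_comp]
  have h4 := LinearMap.finrank_range_add_finrank_ker (U.mkQ.comp (U ⊔ U.map T).subtype)
  rw [LinearMap.range_comp, Submodule.range_subtype, ← h3] at h4
  have h5 : finrank F (LinearMap.ker (U.mkQ.comp (U ⊔ U.map T).subtype)) = finrank F U := by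
    rw [← Submodule.finrank_map_subtype_eq]
    have : (LinearMap.ker (U.mkQ.comp (U ⊔ U.map T).subtype)).map (U ⊔ U.map T).subtype = U := by
      ext x
      simp only [Submodule.mem_map, LinearMap.mem_ker, LinearMap.comp_apply, Submodule.mkQ_apply,
        Submodule.Quotient.mk_eq_zero, Submodule.subtype_apply, Subtype.exists,
        exists_and_left, exists_prop, exists_eq_right_right]
      exact ⟨fun h => h.1, fun h => ⟨h, Submodule.mem_sup_left h⟩⟩
    rw [this]
  omega

theorem swap_sum {S J : Type*} [Fintype S] (s : Finset J) (M : J → Set S) (K : J → ℕ)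
    (c : S → ℕ) (h : ∀ W, ∃ j ∈ s, (∀ j' ∈ s, W ∈ M j' → j' = j) ∧
      (W ∈ M j → c W = K j) ∧ (W ∉ M j → c W = 0)) :
    ∑ W, c W = ∑ j ∈ s, (M j).ncard * K j := by
  classical
  have h1 : ∀ W, c W = ∑ j ∈ s, if W ∈ M j then K j else 0 := by
    intro W
    obtain ⟨j, hj, hu, h1, h2⟩ := h W
    rw [Finset.sum_eq_single j]
    · split_ifs with hW
      · exact h1 hW
      · exact h2 hW
    · intro j' hj' hne
      rw [if_neg]; intro hW; exact hne (hu j' hj' hW)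
    · intro h; exact absurd hj h
  simp only [h1]
  rw [Finset.sum_comm]
  apply Finset.sum_congr rfl
  intro j _
  rw [← Finset.sum_filter, Finset.sum_const, smul_eq_mul]
  congr 1
  rw [Set.ncard_eq_toFinset_card']
  congr 1
  ext; simp

open Module in
theorem double_count {F V : Type*} [Field F] [Fintype F] [AddCommGroup V] [Module F V]
    [FiniteDimensional F V] (T : V →ₗ[F] V) {r : ℕ} (N : ℕ) (hN : finrank F V = N)
    (a u : Fin r → ℕ) :
    ∑ j ∈ Fintype.piFinset (fun _ : Fin r => Finset.range (N+1)),
      (tupleSet T r (fun i => (a i, j i))).ncard *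
      ∏ i : Fin r, gaussZ (Fintype.card F) ((j i : ℤ) - xtd N 0 a ((i:ℕ)+2))
        ((u i : ℤ) - xtd N 0 a ((i:ℕ)+2)) =
    ∑ v ∈ Fintype.piFinset (fun _ : Fin r => Finset.range (N+1)),
      (tupleSet T r (fun i => (u i, v i))).ncard *
      ∏ i : Fin r, gaussZ (Fintype.card F) (((xtd N 0 u (i:ℕ) : ℕ) : ℤ) - (2 * u i - v i))
        ((a i : ℤ) - (2 * u i - v i)) := by
  classical
  have hfin : Finite V := Module.finite_of_finite F
  letI : Fintype (Submodule F V) := Fintype.ofFinite _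
  let R : (Fin r → Submodule F V) → (Fin r → Submodule F V) → Prop := fun W U =>
    (∀ i, finrank F (W i) = a i) ∧ (∀ i, finrank F (U i) = u i) ∧
    (∀ i : Fin r, xtd ⊤ ⊥ W ((i:ℕ) + 2) ≤ U i) ∧ (∀ i, U i ≤ W i ⊓ (W i).comap T)
  have hle : ∀ X : Submodule F V, finrank F X < N + 1 := fun X => by
    have := Submodule.finrank_le X; omega
  have hL := swap_sum (Fintype.piFinset (fun _ : Fin r => Finset.range (N+1)))
    (fun j => tupleSet T r (fun i => (a i, j i)))
    (fun j => ∏ i : Fin r, gaussZ (Fintype.card F) ((j i : ℤ) - xtd N 0 a ((i:ℕ)+2))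
        ((u i : ℤ) - xtd N 0 a ((i:ℕ)+2)))
    (fun W => Nat.card {U // R W U}) (by
      intro W
      refine ⟨fun i => finrank F ↥(W i ⊓ (W i).comap T), ?_, ?_, ?_, ?_⟩
      · rw [Fintype.mem_piFinset]; intro i; rw [Finset.mem_range]; exact hle _
      · intro j' _ h
        rw [mem_tuple] at h
        funext i; exact (h.2.1 i).symm
      · intro h
        rw [mem_tuple] at h
        have hfr : ∀ n, finrank F (xtd (⊤ : Submodule F V) ⊥ W n : Submodule F V) = xtd N 0 a n := by
          intro n
          rw [xtd_finrank, hN]; congr 1; funext i; exact h.1 i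
        have e : {U // R W U} ≃ {U : Fin r → Submodule F V // ∀ i, finrank F (U i) = u i ∧
            xtd ⊤ ⊥ W ((i:ℕ) + 2) ≤ U i ∧ U i ≤ W i ⊓ (W i).comap T} := by
          apply Equiv.subtypeEquivRight
          intro U
          simp only [R, forall_and]
          exact ⟨fun h => h.2, fun h' => ⟨h.1, h'⟩⟩
        simp only
        rw [Nat.card_congr e, Nat.card_congr (Equiv.subtypePiEquivPi (p := fun i (X : Submodule F V) =>
          finrank F X = u i ∧ xtd ⊤ ⊥ W ((i:ℕ) + 2) ≤ X ∧ X ≤ W i ⊓ (W i).comap T)), Nat.card_pi]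
        apply Finset.prod_congr rfl
        intro i _
        rw [card_interval F V _ _ (h.2.2 i), hfr]
      · intro h
        have : IsEmpty {U // R W U} := ⟨fun U => h (by
          rw [mem_tuple]
          exact ⟨U.2.1, fun i => rfl, fun i => (U.2.2.2.1 i).trans (U.2.2.2.2 i)⟩)⟩
        simp)
  have hR := swap_sum (Fintype.piFinset (fun _ : Fin r => Finset.range (N+1)))
    (fun v => tupleSet T r (fun i => (u i, v i)))
    (fun v => ∏ i : Fin r, gaussZ (Fintype.card F) (((xtd N 0 u (i:ℕ) : ℕ) : ℤ) - (2 * u i - v i))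
        ((a i : ℤ) - (2 * u i - v i)))
    (fun U => Nat.card {W // R W U}) (by
      intro U
      have hR' : ∀ W, R W U ↔ (∀ i, finrank F (U i) = u i) ∧ ∀ i, finrank F (W i) = a i ∧
            U i ⊔ (U i).map T ≤ W i ∧ W i ≤ xtd ⊤ ⊥ U (i:ℕ) := by
        intro W
        simp only [R, forall_and, sup_le_iff, Submodule.map_le_iff_le_comap, le_inf_iff]
        rw [interlace]
        tauto
      refine ⟨fun i => finrank F ↥(U i ⊓ (U i).comap T), ?_, ?_, ?_, ?_⟩
      · rw [Fintype.mem_piFinset]; intro i; rw [Finset.mem_range]; exact hle _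
      · intro j' _ h
        rw [mem_tuple] at h
        funext i; exact (h.2.1 i).symm
      · intro h
        rw [mem_tuple] at h
        have hfr : ∀ n, finrank F (xtd (⊤ : Submodule F V) ⊥ U n : Submodule F V) = xtd N 0 u n := by
          intro n
          rw [xtd_finrank, hN]; congr 1; funext i; exact h.1 i
        have e : {W // R W U} ≃ {W : Fin r → Submodule F V // ∀ i, finrank F (W i) = a i ∧
            U i ⊔ (U i).map T ≤ W i ∧ W i ≤ xtd ⊤ ⊥ U (i:ℕ)} := by
          apply Equiv.subtypeEquivRight
          intro W
          rw [hR']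
          exact ⟨fun h => h.2, fun h' => ⟨h.1, h'⟩⟩
        simp only
        rw [Nat.card_congr e, Nat.card_congr (Equiv.subtypePiEquivPi (p := fun i (X : Submodule F V) =>
          finrank F X = a i ∧ U i ⊔ (U i).map T ≤ X ∧ X ≤ xtd ⊤ ⊥ U (i:ℕ))), Nat.card_pi]
        have hch : ∀ i : Fin r, U i ⊔ (U i).map T ≤ xtd ⊤ ⊥ U (i:ℕ) := by
          have h2 := (interlace U (fun i => U i ⊓ (U i).comap T)).mp h.2.2
          intro i
          have h3 := h2 i
          rcases hi : (i:ℕ) with _ | k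
          · simp
          · have hk : k < r := by omega
            rw [hi, xtd_lt _ _ _ k hk] at h3
            rw [xtd_lt _ _ _ k hk, sup_le_iff, Submodule.map_le_iff_le_comap]
            exact le_inf_iff.mp h3
        apply Finset.prod_congr rfl
        intro i _
        have h6 := finrank_sup_map T (U i)
        rw [h.1 i] at h6
        have h7 : (finrank F ↥(U i ⊔ (U i).map T) : ℤ) = 2 * u i - finrank F ↥(U i ⊓ (U i).comap T) := by
          omega
        rw [card_interval F V _ _ (hch i), hfr, h7]
      · intro h
        have : IsEmpty {W // R W U} := ⟨fun W => h (by
          rw [mem_tuple]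
          refine ⟨W.2.2.1, fun i => rfl, ?_⟩
          have h1 := W.2
          rw [interlace U (fun i => U i ⊓ (U i).comap T)]
          have h2 := (interlace W.1 U).mp h1.2.2.1
          intro i
          have h3 := h1.2.2.2 i
          have h4 := h2 i
          rcases hi : (i:ℕ) with _ | k
          · simp
          · have hk : k < r := by omega
            rw [hi, xtd_lt _ _ _ k hk] at h4
            rw [xtd_lt _ _ _ k hk]
            have h5 := h1.2.2.2 ⟨k, hk⟩
            have h6 := h1.2.2.1 ⟨k, hk⟩
            have e : k + 2 = (i:ℕ) + 1 := by omega
            simp only [e, xtd_succ] at h6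
            refine le_inf ((le_inf_iff.mp h3).1.trans h6) ?_
            exact (le_inf_iff.mp h3).2.trans (Submodule.comap_mono h6))⟩
        simp)
  rw [← hL, ← hR]
  simp only [Nat.card_eq_fintype_card, Fintype.card_subtype]
  simp only [Finset.card_filter]
  exact Finset.sum_comm

def gg (q N : ℕ) {r : ℕ} (a b : Fin r → ℕ) : ℕ :=
  ∏ i : Fin r, gaussZ q (((xtd N 0 a (i:ℕ) : ℕ) : ℤ) - a i) ((a i : ℤ) - b i) *
    gaussZ q ((a i : ℤ) - xtd N 0 a ((i:ℕ) + 2)) ((b i : ℤ) - xtd N 0 a ((i:ℕ)+2)) *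
    q ^ ((a i - b i) ^ 2)

theorem gg_identity (q N : ℕ) {r : ℕ} (a u : Fin r → ℕ)
    (h1 : ∀ n ≤ r, xtd N 0 u n ≤ xtd N 0 a n) (h2 : ∀ n ≤ r, xtd N 0 a (n+1) ≤ xtd N 0 u n) :
    ∑ j ∈ Fintype.piFinset (fun _ : Fin r => Finset.range (N+1)),
      gg q N a j *
      ∏ i : Fin r, gaussZ q ((j i : ℤ) - xtd N 0 a ((i:ℕ)+2))
        ((u i : ℤ) - xtd N 0 a ((i:ℕ)+2)) =
    ∑ v ∈ Fintype.piFinset (fun _ : Fin r => Finset.range (N+1)),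
      gg q N u v *
      ∏ i : Fin r, gaussZ q (((xtd N 0 u (i:ℕ) : ℕ) : ℤ) - (2 * u i - v i))
        ((a i : ℤ) - (2 * u i - v i)) := by
  have hN : ∀ n ≤ r + 1, xtd N 0 a n ≤ N := by
    intro n
    induction n with
    | zero => simp
    | succ n ih =>
      intro hn
      have := h1 n (by omega); have := h2 n (by omega); have := ih (by omega); omega
  have hlast : xtd N 0 u (r+1) = xtd N 0 a (r+1) := by simp
  have h1' : ∀ n ≤ r + 1, xtd N 0 u n ≤ xtd N 0 a n := by
    intro n hn
    by_cases h : n ≤ r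
    · exact h1 n h
    · obtain rfl : n = r + 1 := by omega
      rw [hlast]
  have hs1 : ∀ i : Fin r, a i = xtd N 0 a ((i:ℕ)+1) := fun i => by simp
  have hs2 : ∀ i : Fin r, u i = xtd N 0 u ((i:ℕ)+1) := fun i => by simp
  simp only [gg, ← Finset.prod_mul_distrib]
  rw [← Finset.prod_univ_sum (fun _ : Fin r => Finset.range (N+1)) (fun (i : Fin r) (j : ℕ) =>
      gaussZ q (((xtd N 0 a (i:ℕ) : ℕ) : ℤ) - a i) ((a i : ℤ) - j) *
    gaussZ q ((a i : ℤ) - xtd N 0 a ((i:ℕ) + 2)) ((j : ℤ) - xtd N 0 a ((i:ℕ)+2)) *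
    q ^ ((a i - j) ^ 2) * gaussZ q ((j : ℤ) - xtd N 0 a ((i:ℕ)+2))
        ((u i : ℤ) - xtd N 0 a ((i:ℕ)+2)))]
  rw [← Finset.prod_univ_sum (fun _ : Fin r => Finset.range (N+1)) (fun (i : Fin r) (v : ℕ) =>
      gaussZ q (((xtd N 0 u (i:ℕ) : ℕ) : ℤ) - u i) ((u i : ℤ) - v) *
    gaussZ q ((u i : ℤ) - xtd N 0 u ((i:ℕ) + 2)) ((v : ℤ) - xtd N 0 u ((i:ℕ)+2)) *
    q ^ ((u i - v) ^ 2) * gaussZ q (((xtd N 0 u (i:ℕ) : ℕ) : ℤ) - (2 * u i - v))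
        ((a i : ℤ) - (2 * u i - v)))]
  have hA : ∀ i : Fin r, _ := fun i => inner_left q N (xtd N 0 a (i:ℕ)) (a i) (u i)
    (xtd N 0 a ((i:ℕ)+2))
    (by rw [hs2]; exact h2 (i+1) (by omega)) (by rw [hs1, hs2]; exact h1 (i+1) (by omega))
    (by rw [hs1]; exact (h2 i (by omega)).trans (h1 i (by omega))) (hN i (by omega))
  have hB : ∀ i : Fin r, _ := fun i => inner_right q N (xtd N 0 u (i:ℕ)) (a i) (u i)
    (xtd N 0 u ((i:ℕ)+2))
    (by rw [hs2]; exact (h1' (i+2) (by omega)).trans (h2 (i+1) (by omega)))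
    (by rw [hs1, hs2]; exact h1 (i+1) (by omega))
    (by rw [hs1]; exact (h2 i (by omega))) ((h1 i (by omega)).trans (hN i (by omega)))
  rw [Finset.prod_congr rfl (fun i _ => hA i), Finset.prod_congr rfl (fun i _ => hB i)]
  have ht := telescope q r (xtd N 0 a) (xtd N 0 u) (by simp) (by simp) h1 h2
  rw [← Fin.prod_univ_eq_prod_range (fun i => gaussNat q (xtd N 0 a (i+1) - xtd N 0 a (i+2)) (xtd N 0 a (i+1) - xtd N 0 u (i+1)) *
        gaussNat q (xtd N 0 a i - xtd N 0 u (i+1)) (xtd N 0 a (i+1) - xtd N 0 u (i+1))),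
    ← Fin.prod_univ_eq_prod_range (fun i => gaussNat q (xtd N 0 u i - xtd N 0 u (i+1)) (xtd N 0 a (i+1) - xtd N 0 u (i+1)) *
        gaussNat q (xtd N 0 a (i+1) - xtd N 0 u (i+2)) (xtd N 0 a (i+1) - xtd N 0 u (i+1)))] at ht
  simpa only [xtd_succ] using ht

open Module in
theorem inv_case {F V : Type*} [Field F] [Fintype F] [AddCommGroup V] [Module F V]
    [FiniteDimensional F V] (T : V →ₗ[F] V) (hcyc : IsCyclicOp T) (hnil : T ^ (finrank F V) = 0)
    {r : ℕ} (a : Fin r → ℕ) (ha : ∀ i, a i ≤ finrank F V)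
    (hc : ∀ i : Fin r, xtd (finrank F V) 0 a ((i:ℕ)+2) ≤ a i) :
    (tupleSet T r (fun i => (a i, a i))).ncard = 1 := by
  rw [Set.ncard_eq_one]
  refine ⟨fun i => LinearMap.ker (T ^ (a i)), ?_⟩
  ext W
  rw [mem_tuple, Set.mem_singleton_iff]
  constructor
  · rintro ⟨h1, h2, _⟩
    funext i
    have h3 : W i ⊓ (W i).comap T = W i :=
      Submodule.eq_of_le_of_finrank_eq inf_le_left (by rw [h1, h2])
    have h4 := inv_eq_ker F V T hcyc hnil (W i) (inf_eq_left.mp h3)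
    rw [h1] at h4
    exact h4
  · rintro rfl
    have hinv : ∀ k, LinearMap.ker (T ^ k) ⊓ (LinearMap.ker (T ^ k)).comap T = LinearMap.ker (T ^ k) := by
      intro k
      rw [inf_eq_left]
      intro x hx
      rw [Submodule.mem_comap, LinearMap.mem_ker]
      rw [LinearMap.mem_ker] at hx
      have : (T ^ k) (T x) = T ((T ^ k) x) := by
        rw [← Module.End.mul_apply, ← Module.End.mul_apply, ← pow_succ, ← pow_succ']
      rw [this, hx, map_zero]
    refine ⟨fun i => ker_pow_dim F V T hcyc hnil _ (ha i), fun i => ?_, fun i => ?_⟩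
    · simp only
      rw [hinv]; exact ker_pow_dim F V T hcyc hnil _ (ha i)
    · simp only
      rw [hinv]
      by_cases hi : (i:ℕ) + 1 < r
      · rw [xtd_lt _ _ _ _ hi]
        have h3 := hc i
        rw [xtd_lt _ _ _ _ hi] at h3
        intro x hx
        rw [LinearMap.mem_ker] at hx ⊢
        obtain ⟨d, hd⟩ := Nat.exists_eq_add_of_le' h3
        rw [hd, pow_add, Module.End.mul_apply, hx, map_zero]
      · have : (i:ℕ) + 2 = r + 1 := by omega
        rw [this, xtd_last]; exact bot_le

open Module in
theorem core {F V : Type*} [Field F] [Fintype F] [AddCommGroup V] [Module F V]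
    [FiniteDimensional F V] (T : V →ₗ[F] V) (hcyc : IsCyclicOp T) (N : ℕ) (hN : finrank F V = N)
    (hnil : T ^ N = 0) {r : ℕ} :
    ∀ (s m : ℕ) (a b : Fin r → ℕ), ∑ i, a i = s → r * N - ∑ i, b i = m →
      (tupleSet T r (fun i => (a i, b i))).ncard = gg (Fintype.card F) N a b := by
  intro s
  induction s using Nat.strong_induction_on with
  | _ s ihs =>
  intro m
  induction m using Nat.strong_induction_on with
  | _ m ihm =>
  intro a b hs hm
  have hzero : ∀ P : Prop, ¬ P → (∀ W ∈ tupleSet T r (fun i => (a i, b i)), P) →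
      (tupleSet T r (fun i => (a i, b i))).ncard = 0 := by
    intro P hP h
    have : tupleSet T r (fun i => (a i, b i)) = ∅ := by
      rw [Set.eq_empty_iff_forall_notMem]; intro W hW; exact hP (h W hW)
    rw [this, Set.ncard_empty]
  by_cases hA : ∀ i, b i ≤ a i
  swap
  · rw [hzero _ hA]
    · push Not at hA
      obtain ⟨i, hi⟩ := hA
      symm
      unfold gg
      apply Finset.prod_eq_zero (Finset.mem_univ i)
      rw [gz_zero _ _ ((a i : ℤ) - b i) (by omega)]; simp
    · intro W hW i
      rw [mem_tuple] at hW
      rw [← hW.1 i, ← hW.2.1 i]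
      exact Submodule.finrank_mono inf_le_left
  by_cases hB : ∀ i : Fin r, xtd N 0 a ((i:ℕ)+2) ≤ b i
  swap
  · rw [hzero _ hB]
    · push Not at hB
      obtain ⟨i, hi⟩ := hB
      symm
      unfold gg
      apply Finset.prod_eq_zero (Finset.mem_univ i)
      rw [gz_zero _ _ ((b i : ℤ) - _) (by omega)]; simp
    · intro W hW i
      rw [mem_tuple] at hW
      have := Submodule.finrank_mono (hW.2.2 i)
      rw [xtd_finrank, hW.2.1 i, hN] at this
      simpa only [hW.1] using this
  by_cases hC : ∀ i : Fin r, (i:ℕ) = 0 → a i ≤ N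
  swap
  · rw [hzero _ hC]
    · push Not at hC
      obtain ⟨i, hi0, hi⟩ := hC
      symm
      unfold gg
      apply Finset.prod_eq_zero (Finset.mem_univ i)
      have := hA i
      rw [hi0, xtd_zero, gz_zero _ _ ((a i : ℤ) - b i) (by omega)]; simp
    · intro W hW i _
      rw [mem_tuple] at hW
      rw [← hW.1 i, ← hN]
      exact Submodule.finrank_le _
  have v1 : ∀ n ≤ r, xtd N 0 b n ≤ xtd N 0 a n := by
    intro n hn
    rcases n with _ | n
    · simp
    · rw [xtd_lt _ _ _ n (by omega), xtd_lt _ _ _ n (by omega)]; exact hA _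
  have v2 : ∀ n ≤ r, xtd N 0 a (n+1) ≤ xtd N 0 b n := by
    intro n hn
    rcases n with _ | n
    · rw [xtd_zero]
      by_cases hr : 0 < r
      · rw [xtd_lt _ _ _ 0 hr]; exact hC _ rfl
      · obtain rfl : r = 0 := by omega
        rw [xtd_last]; omega
    · rw [xtd_lt _ _ b n (by omega)]; exact hB ⟨n, by omega⟩
  have haN : ∀ n ≤ r + 1, xtd N 0 a n ≤ N := by
    intro n
    induction n with
    | zero => simp
    | succ n ih =>
      intro hn
      have := v1 n (by omega); have := v2 n (by omega); have := ih (by omega); omega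
  have haN' : ∀ i, a i ≤ N := fun i => by
    have := haN (i+1) (by omega)
    rwa [xtd_succ] at this
  by_cases hab : a = b
  · subst hab
    rw [inv_case T hcyc (by rw [hN]; exact hnil) a (by rw [hN]; exact haN') (by rw [hN]; exact hB)]
    symm
    unfold gg
    apply Finset.prod_eq_one
    intro i _
    have l1 := (v2 i (by omega))
    rw [xtd_succ] at l1
    have l2 := hB i
    rw [gz_eq _ _ ((a i : ℤ) - a i) (xtd N 0 a (i:ℕ) - a i) 0 (by omega) (by omega), gn_zero_right,
      gz_eq _ _ _ (a i - xtd N 0 a ((i:ℕ)+2)) (a i - xtd N 0 a ((i:ℕ)+2)) (by omega) (by omega),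
      gn_self]
    simp
  have hlt : ∑ i, b i < ∑ i, a i := by
    apply Finset.sum_lt_sum (fun i _ => hA i)
    by_contra hcon
    push Not at hcon
    exact hab (funext fun i => le_antisymm (hcon i (Finset.mem_univ i)) (hA i))
  have E1 := double_count T N hN a b
  have E2 := gg_identity (Fintype.card F) N a b v1 v2
  have E3 : ∀ v, (tupleSet T r (fun i => (b i, v i))).ncard = gg (Fintype.card F) N b v :=
    fun v => ihs _ (by omega) _ b v rfl rfl
  simp only [E3] at E1
  rw [← E2] at E1
  have hbm : b ∈ Fintype.piFinset (fun _ : Fin r => Finset.range (N+1)) := by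
    rw [Fintype.mem_piFinset]; intro i; rw [Finset.mem_range]
    have := hA i; have := haN' i; omega
  rw [← Finset.add_sum_erase _ _ hbm, ← Finset.add_sum_erase _ _ hbm] at E1
  have K1 : ∏ i : Fin r, gaussZ (Fintype.card F) ((b i : ℤ) - xtd N 0 a ((i:ℕ)+2))
        ((b i : ℤ) - xtd N 0 a ((i:ℕ)+2)) = 1 := by
    apply Finset.prod_eq_one
    intro i _
    have l2 := hB i
    rw [gz_eq _ _ _ (b i - xtd N 0 a ((i:ℕ)+2)) (b i - xtd N 0 a ((i:ℕ)+2)) (by omega) (by omega),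
      gn_self]
  rw [K1, mul_one, mul_one] at E1
  refine Nat.add_right_cancel (E1.trans ?_)
  congr 1
  apply Finset.sum_congr rfl
  intro j hj
  rw [Finset.mem_erase, Fintype.mem_piFinset] at hj
  by_cases hjb : ∀ i, b i ≤ j i
  · rw [ihm (r * N - ∑ i, j i) ?_ a j hs rfl]
    have h5 : ∑ i, b i < ∑ i, j i := by
      apply Finset.sum_lt_sum (fun i _ => hjb i)
      by_contra hcon
      push Not at hcon
      exact hj.1 (funext fun i => le_antisymm (hcon i (Finset.mem_univ i)) (hjb i))
    have h6 : ∑ i, j i ≤ r * N := by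
      have : ∑ i, j i ≤ ∑ _i : Fin r, N := Finset.sum_le_sum fun i _ => by
        have := Finset.mem_range.mp (hj.2 i); omega
      simpa using this
    omega
  · push Not at hjb
    obtain ⟨i, hi⟩ := hjb
    have : ∏ i : Fin r, gaussZ (Fintype.card F) ((j i : ℤ) - xtd N 0 a ((i:ℕ)+2))
        ((b i : ℤ) - xtd N 0 a ((i:ℕ)+2)) = 0 := by
      apply Finset.prod_eq_zero (Finset.mem_univ i)
      apply gz_zero; omega
    rw [this]; simp


/-- for a cyclic nilpotent operator `T` on an `N`-dimensional space,
with `a 0 = (N,N) ≥ a 1 ≥ ⋯ ≥ a r ≥ a (r+1) = (0,0)` (coordinatewise chain),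
`|[(a₁,₁,a₁,₂),…,(a_r,₁,a_r,₂)]_T| =
∏ᵢ [aᵢ₋₁,₁ − aᵢ,₁, aᵢ,₁ − aᵢ,₂]_q [aᵢ,₁ − aᵢ₊₁,₁, aᵢ,₂ − aᵢ₊₁,₁]_q q^{(aᵢ,₁−aᵢ,₂)²}`. -/
theorem tupleSet_ncard_cyclic_nilpotent (F V : Type*) [Field F] [Fintype F]
    [AddCommGroup V] [Module F V] [FiniteDimensional F V]
    (N : ℕ) (hN : Module.finrank F V = N)
    (T : V →ₗ[F] V) (hcyc : IsCyclicOp T) (hnil : T ^ N = 0)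
    (r : ℕ) (a : ℕ → ℕ × ℕ)
    (h0 : a 0 = (N, N)) (hlast : a (r + 1) = (0, 0))
    (h1 : ∀ i, 1 ≤ i → i ≤ r → (a i).2 ≤ (a i).1)
    (h2 : ∀ i, i ≤ r → (a (i + 1)).1 ≤ (a i).2) :
    Set.ncard (tupleSet T r (fun i => a ((i : ℕ) + 1))) =
      ∏ i : Fin r,
        gaussZ (Fintype.card F)
            (((a (i : ℕ)).1 : ℤ) - ((a ((i : ℕ) + 1)).1 : ℤ))
            (((a ((i : ℕ) + 1)).1 : ℤ) - ((a ((i : ℕ) + 1)).2 : ℤ)) *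
        gaussZ (Fintype.card F)
            (((a ((i : ℕ) + 1)).1 : ℤ) - ((a ((i : ℕ) + 2)).1 : ℤ))
            (((a ((i : ℕ) + 1)).2 : ℤ) - ((a ((i : ℕ) + 2)).1 : ℤ)) *
        Fintype.card F ^ (((a ((i : ℕ) + 1)).1 - (a ((i : ℕ) + 1)).2) ^ 2) := by
  have h := core T hcyc N hN hnil (r := r) _ _ (fun i => (a ((i:ℕ)+1)).1) (fun i => (a ((i:ℕ)+1)).2) rfl rfl
  refine Eq.trans h ?_
  have he : ∀ n ≤ r + 1, xtd N 0 (fun i : Fin r => (a ((i:ℕ)+1)).1) n = (a n).1 := by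
    intro n hn
    rcases n with _ | n
    · rw [xtd_zero, h0]
    · by_cases hn' : n < r
      · rw [xtd_lt _ _ _ n hn']
      · obtain rfl : n = r := by omega
        rw [xtd_last, hlast]
  unfold gg
  apply Finset.prod_congr rfl
  intro i _
  rw [he i (by omega), he (i+2) (by omega)]
end

section
/- Let T be a linear operator on an md-dimensional vector space V over F_q, where m, d are positive integers. If T is cyclic and its minimal polynomial is (x − c)^{md} for some c ∈ F_q (i.e., T is cyclic and p-primary for a linear polynomial p), then σ(m,d;T) = q^{m^2(d−1)}. -/
/-- `W` is an `m`-dimensional `T`-splitting subspace: `V = W ⊕ TW ⊕ ⋯ ⊕ T^{d-1}W`. -/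
def IsSplittingSubspace {F V : Type*} [Field F] [AddCommGroup V] [Module F V]
    (T : V →ₗ[F] V) (m d : ℕ) (W : Submodule F V) : Prop :=
  Module.finrank F W = m ∧
  iSupIndep (fun i : Fin d => W.map (T ^ (i : ℕ))) ∧
  (⨆ i : Fin d, W.map (T ^ (i : ℕ))) = ⊤

/-- `σ(m,d;T)`, the number of `m`-dimensional `T`-splitting subspaces. -/
noncomputable def splitCount {F V : Type*} [Field F] [AddCommGroup V] [Module F V]
    (T : V →ₗ[F] V) (m d : ℕ) : ℕ :=
  Set.ncard {W : Submodule F V | IsSplittingSubspace T m d W}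

/-- No nonzero `A`-invariant subspace inside `U`. -/
def SimpleOn {F V : Type*} [Field F] [AddCommGroup V] [Module F V]
    (A : V →ₗ[F] V) (U : Submodule F V) : Prop :=
  ∀ K : Submodule F V, K ≤ U → (∀ x ∈ K, A x ∈ K) → K = ⊥

def BadExt {F V : Type*} [Field F] [AddCommGroup V] [Module F V]
    (A : V →ₗ[F] V) (U : Submodule F V) (u' v : V) : Prop :=
  ∃ K : Submodule F V, K ≠ ⊥ ∧ K ≤ U ⊔ Submodule.span F {u'} ∧
    ∀ (a : F), ∀ u ∈ U, a • u' + u ∈ K → a • v + A u ∈ K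

section E
variable {F V : Type*} [Field F] [AddCommGroup V] [Module F V]

lemma mem_sup_sing {U : Submodule F V} {u' x : V} :
    x ∈ U ⊔ Submodule.span F {u'} ↔ ∃ a : F, ∃ u ∈ U, a • u' + u = x := by
  rw [Submodule.mem_sup]
  constructor
  · rintro ⟨y, hy, z, hz, rfl⟩
    obtain ⟨a, rfl⟩ := Submodule.mem_span_singleton.1 hz
    exact ⟨a, y, hy, add_comm _ _⟩
  · rintro ⟨a, u, hu, rfl⟩
    exact ⟨u, hu, a • u', Submodule.smul_mem _ _ (Submodule.mem_span_singleton_self _), add_comm _ _⟩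

lemma coef_unique {U : Submodule F V} {u' : V} (h : u' ∉ U) {a b : F} {u w : V} (hu : u ∈ U)
    (hw : w ∈ U) (e : a • u' + u = b • u' + w) : a = b ∧ u = w := by
  have : a = b := by
    by_contra hab
    apply h
    have h1 : (a - b) • u' = w - u := by
      rw [sub_smul]; rw [sub_eq_sub_iff_add_eq_add, e, add_comm]
    have h2 : u' = (a - b)⁻¹ • (w - u) := by
      rw [← h1, smul_smul, inv_mul_cancel₀ (sub_ne_zero.2 hab), one_smul]
    rw [h2]
    exact U.smul_mem _ (U.sub_mem hw hu)
  subst this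
  exact ⟨rfl, add_left_cancel e⟩

lemma bad_exists {A : V →ₗ[F] V} {U : Submodule F V} (hs : SimpleOn A U) {u' v : V}
    (hb : BadExt A U u' v) : ∃ w ∈ U, v + A w ∈ U ⊔ Submodule.span F {u'} := by
  obtain ⟨K, hK0, hK, hinv⟩ := hb
  by_contra hcon
  push Not at hcon
  apply hK0
  have key : ∀ (a : F), ∀ u ∈ U, a • u' + u ∈ K → a = 0 := by
    intro a u hu h
    by_contra ha
    apply hcon (a⁻¹ • u) (U.smul_mem _ hu)
    have := K.smul_mem a⁻¹ (hinv a u hu h)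
    rw [smul_add, smul_smul, inv_mul_cancel₀ ha, one_smul] at this
    rw [map_smul]
    exact hK this
  apply hs K
  · intro x hx
    obtain ⟨a, u, hu, rfl⟩ := mem_sup_sing.1 (hK hx)
    have := key a u hu hx
    subst this
    simpa using hu
  · intro x hx
    obtain ⟨a, u, hu, rfl⟩ := mem_sup_sing.1 (hK hx)
    have := key a u hu hx
    subst this
    have := hinv 0 u hu hx
    simpa using this

lemma bad_shift {A : V →ₗ[F] V} {U : Submodule F V} {u' : V} (h : u' ∉ U) {u v : V} (hu : u ∈ U)
    (hv : v + A u ∈ U ⊔ Submodule.span F {u'}) :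
    BadExt A (U ⊓ (U ⊔ Submodule.span F {u'}).comap A) (u' + u) (v + A u) ↔ BadExt A U u' v := by
  constructor
  · rintro ⟨K, hK0, hK, hinv⟩
    refine ⟨K, hK0, ?_, ?_⟩
    · intro x hx
      obtain ⟨a, w, hw, rfl⟩ := mem_sup_sing.1 (hK hx)
      exact mem_sup_sing.2 ⟨a, a • u + w, U.add_mem (U.smul_mem _ hu) hw.1, by module⟩
    · intro a w hw hx
      obtain ⟨b, w', hw', e⟩ := mem_sup_sing.1 (hK hx)
      have e' : b • u' + (b • u + w') = a • u' + w := by rw [← e]; module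
      obtain ⟨rfl, rfl⟩ := coef_unique h (U.add_mem (U.smul_mem _ hu) hw'.1) hw e'
      have := hinv b w' hw' (by rw [e]; exact hx)
      convert this using 1
      rw [map_add, map_smul]; module
  · rintro ⟨K, hK0, hK, hinv⟩
    refine ⟨K, hK0, ?_, ?_⟩
    · intro x hx
      obtain ⟨a, w, hw, rfl⟩ := mem_sup_sing.1 (hK hx)
      refine mem_sup_sing.2 ⟨a, w - a • u, ⟨U.sub_mem hw (U.smul_mem _ hu), ?_⟩, by module⟩
      have h1 := hK (hinv a w hw hx)
      have h2 := Submodule.sub_mem _ h1 (Submodule.smul_mem _ a hv)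
      rw [SetLike.mem_coe, Submodule.mem_comap]
      convert h2 using 1
      rw [map_sub, map_smul]; module
    · intro a w hw hx
      have := hinv a (a • u + w) (U.add_mem (U.smul_mem _ hu) hw.1) (by convert hx using 1; module)
      convert this using 1
      rw [map_add, map_smul]; module

open Classical in
lemma card_submodule_filter [Fintype F] [Fintype V] (U : Submodule F V) :
    (Finset.univ.filter (fun v => v ∈ U)).card = Fintype.card F ^ Module.finrank F U := by
  rw [← Module.card_eq_pow_finrank (K := F) (V := U)]
  exact (Fintype.card_subtype _).symm

open Classical in
lemma card_bad [Fintype F] [Fintype V] (A : V →ₗ[F] V) :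
    ∀ (n : ℕ) (U : Submodule F V) (u' : V), Module.finrank F U = n → u' ∉ U → SimpleOn A U →
    (Finset.univ.filter (fun v => BadExt A U u' v)).card
      = Fintype.card F ^ (n + 1) := by
  intro n
  induction n using Nat.strong_induction_on with
  | _ n ih =>
  intro U u' hn hu' hs
  set U' := U ⊔ Submodule.span F {u'} with hU'
  have hfin : Module.finrank F U' = n + 1 := by
    rw [hU', Submodule.finrank_sup_span_singleton hu', hn]
  have hu'U' : u' ∈ U' := Submodule.mem_sup_right (Submodule.mem_span_singleton_self _)
  have hle : U ≤ U' := le_sup_left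
  set U1 := U ⊓ U'.comap A with hU1
  by_cases hAU : U ≤ U'.comap A
  · rw [← hfin, ← card_submodule_filter U']
    congr 1
    ext v
    simp only [Finset.mem_filter, Finset.mem_univ, true_and]
    constructor
    · intro hb
      obtain ⟨w, hw, h⟩ := bad_exists hs hb
      have := U'.sub_mem h (hAU hw)
      simpa using this
    · intro hv
      refine ⟨U', ?_, le_rfl, ?_⟩
      · intro h0
        rw [h0] at hu'U'
        rw [Submodule.mem_bot] at hu'U'
        exact hu' (hu'U' ▸ U.zero_mem)
      · intro a u hu _
        exact U'.add_mem (U'.smul_mem _ hv) (hAU hu)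
  · have hlt : U1 < U := lt_of_le_of_ne inf_le_left (fun h => hAU (by rw [← h]; exact inf_le_right))
    have hrk := Submodule.finrank_lt_finrank_of_lt hlt
    rw [hn] at hrk
    have hs1 : SimpleOn A U1 := fun K hK => hs K (hK.trans inf_le_left)
    have := Finset.card_mul_eq_card_mul (fun (u v : V) => v + A u ∈ U')
      (s := Finset.univ.filter (fun u => u ∈ U))
      (t := Finset.univ.filter (fun v => BadExt A U u' v))
      (m := Fintype.card F ^ (Module.finrank F U1 + 1)) (n := Fintype.card F ^ (Module.finrank F U1)) ?_ ?_
    · rw [card_submodule_filter, hn, pow_succ _ (Module.finrank F U1),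
        mul_comm _ (Fintype.card F), ← mul_assoc] at this
      have hpos : 0 < Fintype.card F ^ (Module.finrank F U1) := pow_pos Fintype.card_pos _
      rw [pow_succ]
      exact (Nat.eq_of_mul_eq_mul_right hpos this).symm
    · intro u hu
      simp only [Finset.mem_filter, Finset.mem_univ, true_and] at hu
      have hnot : u' + u ∉ U1 := fun h => hu' (by simpa using U.sub_mem h.1 hu)
      rw [← ih _ hrk U1 (u' + u) rfl hnot hs1]
      apply Finset.card_bij (fun v _ => v + A u)
      · intro v hv
        simp only [Finset.mem_bipartiteAbove, Finset.mem_filter, Finset.mem_univ, true_and] at hv ⊢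
        exact (bad_shift hu' hu hv.2).2 hv.1
      · intro a _ b _ h
        exact add_right_cancel h
      · intro b hb
        simp only [Finset.mem_filter, Finset.mem_univ, true_and] at hb
        have hbU : b ∈ U' := by
          obtain ⟨w, hw, h⟩ := bad_exists hs1 hb
          have hle2 : U1 ⊔ Submodule.span F {u' + u} ≤ U' := by
            refine sup_le (inf_le_left.trans hle) ?_
            rw [Submodule.span_singleton_le_iff_mem]
            exact U'.add_mem hu'U' (hle hu)
          have := U'.sub_mem (hle2 h) hw.2
          simpa using this
        refine ⟨b - A u, ?_, by simp⟩
        have e : b - A u + A u = b := by simp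
        simp only [Finset.mem_bipartiteAbove, Finset.mem_filter, Finset.mem_univ, true_and, e]
        refine ⟨?_, hbU⟩
        rw [← bad_shift hu' hu (by rw [e]; exact hbU), e]
        exact hb
    · intro v hv
      simp only [Finset.mem_filter, Finset.mem_univ, true_and] at hv
      obtain ⟨w, hw, h⟩ := bad_exists hs hv
      rw [← card_submodule_filter]
      apply Finset.card_bij (fun u _ => u - w)
      · intro u hu
        simp only [Finset.mem_bipartiteBelow, Finset.mem_filter, Finset.mem_univ, true_and] at hu ⊢
        refine ⟨U.sub_mem hu.1 hw, ?_⟩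
        have := U'.sub_mem hu.2 h
        rw [SetLike.mem_coe, Submodule.mem_comap, map_sub]
        simpa using this
      · intro a _ b _ h
        exact sub_left_injective h
      · intro b hb
        simp only [Finset.mem_filter, Finset.mem_univ, true_and] at hb
        refine ⟨b + w, ?_, by simp⟩
        simp only [Finset.mem_bipartiteBelow, Finset.mem_filter, Finset.mem_univ, true_and]
        refine ⟨U.add_mem hb.1 hw, ?_⟩
        have := U'.add_mem hb.2 h
        rw [map_add]
        convert this using 1
        abel

end E
section N
variable {F V : Type*} [Field F] [AddCommGroup V] [Module F V]

lemma nil_sum {N : V →ₗ[F] V} {p : ℕ} (h0 : N ^ (p + 1) = 0) (z : V) (a : Fin (p + 1) → F)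
    (i : Fin (p + 1)) (ha : ∀ j < i, a j = 0) :
    (N ^ (p - i : ℕ)) (∑ j, a j • (N ^ (j : ℕ)) z) = a i • (N ^ p) z := by
  rw [map_sum, Finset.sum_eq_single i]
  · rw [map_smul, ← Module.End.mul_apply, ← pow_add]
    congr 3
    omega
  · intro j _ hj
    rcases lt_or_gt_of_ne hj with h | h
    · rw [ha j h]; simp
    · rw [map_smul, ← Module.End.mul_apply, ← pow_add]
      have : (p - i : ℕ) + j = (p + 1) + ((p - i : ℕ) + j - (p + 1)) := by
        have : (i : ℕ) < j := h
        omega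
      rw [this, pow_add, h0]
      simp
  · simp

lemma nil_indep {N : V →ₗ[F] V} {p : ℕ} (h0 : N ^ (p + 1) = 0) {z : V} (hz : (N ^ p) z ≠ 0) :
    LinearIndependent F (fun i : Fin (p + 1) => (N ^ (i : ℕ)) z) := by
  rw [Fintype.linearIndependent_iff]
  intro a ha i
  induction i using WellFoundedLT.induction with
  | _ i ih =>
  have := nil_sum h0 z a i ih
  rw [ha, map_zero] at this
  exact (smul_eq_zero.1 this.symm).resolve_right hz

lemma nil_repr [FiniteDimensional F V] {N : V →ₗ[F] V} {p : ℕ} (hp : Module.finrank F V = p + 1)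
    (h0 : N ^ (p + 1) = 0) {z : V} (hz : (N ^ p) z ≠ 0) (x : V) :
    ∃ a : Fin (p + 1) → F, x = ∑ j, a j • (N ^ (j : ℕ)) z := by
  have hi := nil_indep h0 hz
  let b := basisOfLinearIndependentOfCardEqFinrank hi (by simp [hp])
  refine ⟨fun i => b.repr x i, ?_⟩
  conv_lhs => rw [← b.sum_repr x]
  simp [b]

lemma nil_mem [FiniteDimensional F V] {N : V →ₗ[F] V} {p : ℕ} (hp : Module.finrank F V = p + 1)
    (h0 : N ^ (p + 1) = 0) {z : V} (hz : (N ^ p) z ≠ 0) (K : Submodule F V) (hK : K ≠ ⊥)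
    (hinv : ∀ x ∈ K, N x ∈ K) : (N ^ p) z ∈ K := by
  by_contra hcon
  obtain ⟨x, hx, hx0⟩ := K.ne_bot_iff.1 hK
  obtain ⟨a, rfl⟩ := nil_repr hp h0 hz x
  apply hx0
  have hinv' : ∀ (k : ℕ), ∀ y ∈ K, (N ^ k) y ∈ K := by
    intro k
    induction k with
    | zero => simp
    | succ k ih => intro y hy; rw [pow_succ', Module.End.mul_apply]; exact hinv _ (ih y hy)
  have : ∀ i, a i = 0 := by
    intro i
    induction i using WellFoundedLT.induction with
    | _ i ih =>
    have h1 := nil_sum h0 z a i ih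
    by_contra hai
    have h2 := hinv' (p - i : ℕ) _ hx
    rw [h1] at h2
    exact hcon ((K.smul_mem_iff hai).1 h2)
  simp [this]

open Classical in
lemma nil_card [Fintype F] [Fintype V] {N : V →ₗ[F] V} {p : ℕ} (hp : Module.finrank F V = p + 1)
    (h0 : N ^ (p + 1) = 0) {z : V} (hz : (N ^ p) z ≠ 0) :
    (Finset.univ.filter (fun x => (N ^ p) x ≠ 0)).card
      = Fintype.card F ^ (p + 1) - Fintype.card F ^ p := by
  have hr : LinearMap.range (N ^ p) = Submodule.span F {(N ^ p) z} := by
    apply le_antisymm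
    · rintro _ ⟨x, rfl⟩
      obtain ⟨a, rfl⟩ := nil_repr hp h0 hz x
      have := nil_sum h0 z a 0 (fun j hj => by simp at hj)
      simp only [Fin.val_zero, Nat.sub_zero] at this
      rw [this]
      exact Submodule.smul_mem _ _ (Submodule.mem_span_singleton_self _)
    · rw [Submodule.span_singleton_le_iff_mem]
      exact ⟨z, rfl⟩
  have hk := LinearMap.finrank_range_add_finrank_ker (N ^ p)
  rw [hr, finrank_span_singleton hz, hp] at hk
  have hk' : Module.finrank F (LinearMap.ker (N ^ p)) = p := by omega
  have h1 := card_submodule_filter (LinearMap.ker (N ^ p))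
  have h2 := Finset.card_filter_add_card_filter_not (s := (Finset.univ : Finset V))
    (fun x => x ∈ LinearMap.ker (N ^ p))
  rw [h1, hk', Finset.card_univ, Module.card_eq_pow_finrank (K := F) (V := V), hp] at h2
  simp only [LinearMap.mem_ker] at h2
  simp only [ne_eq]
  omega

open Classical in
lemma card_not_mem [Fintype F] [Fintype V] (U : Submodule F V) :
    (Finset.univ.filter (fun x => x ∉ U)).card
      = Fintype.card F ^ Module.finrank F V - Fintype.card F ^ Module.finrank F U := by
  have h1 := card_submodule_filter U
  have h2 := Finset.card_filter_add_card_filter_not (s := (Finset.univ : Finset V))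
    (fun x => x ∈ U)
  rw [h1, Finset.card_univ, Module.card_eq_pow_finrank (K := F) (V := V)] at h2
  omega

/-- a cyclic vector for a simple partial map of corank one -/
lemma exists_cyclic [FiniteDimensional F V] {p : ℕ} (hp : Module.finrank F V = p + 1)
    (A : V →ₗ[F] V) (U : Submodule F V) (hU : Module.finrank F U = p) (hs : SimpleOn A U) :
    ∃ y : V, LinearIndependent F (fun i : Fin (p + 1) => (A ^ (i : ℕ)) y) ∧
      ∀ i < p, (A ^ i) y ∈ U := by
  have hUne : U < ⊤ := by
    rw [lt_top_iff_ne_top]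
    rintro rfl
    rw [finrank_top] at hU
    omega
  obtain ⟨ξ, hξ0, hξ⟩ := Submodule.exists_le_ker_of_lt_top U hUne
  have hker : LinearMap.ker ξ = U := by
    symm
    apply Submodule.eq_of_le_of_finrank_le hξ
    have : LinearMap.ker ξ < ⊤ := by
      rw [lt_top_iff_ne_top]
      intro h
      exact hξ0 (LinearMap.ker_eq_top.1 h)
    have := Submodule.finrank_lt this.ne
    omega
  let L : V →ₗ[F] (Fin p → F) := LinearMap.pi (fun i : Fin p => ξ ∘ₗ (A ^ (i : ℕ)))
  have hL : LinearMap.ker L ≠ ⊥ := by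
    apply LinearMap.ker_ne_bot_of_finrank_lt
    rw [hp]; simp
  obtain ⟨y, hy, hy0⟩ := (Submodule.ne_bot_iff _).1 hL
  have hyU : ∀ i < p, (A ^ i) y ∈ U := by
    intro i hi
    rw [← hker, LinearMap.mem_ker]
    exact congrFun hy ⟨i, hi⟩
  refine ⟨y, ?_, hyU⟩
  have main : ∀ r ≤ p + 1, LinearIndependent F (fun i : Fin r => (A ^ (i : ℕ)) y) := by
    intro r
    induction r with
    | zero => intro _; exact linearIndependent_empty_type
    | succ r ih =>
      intro hr
      rw [linearIndependent_finSucc']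
      refine ⟨ih (by omega), ?_⟩
      intro hmem
      have hmem' : (A ^ r) y ∈ Submodule.span F (Set.range (fun i : Fin r => (A ^ (i : ℕ)) y)) := hmem
      set K := Submodule.span F (Set.range (fun i : Fin r => (A ^ (i : ℕ)) y)) with hKdef
      have hKU : K ≤ U := by
        rw [hKdef, Submodule.span_le]
        rintro _ ⟨i, rfl⟩
        exact hyU i (by omega)
      have hKinv : K ≤ K.comap A := by
        conv_lhs => rw [hKdef]
        rw [Submodule.span_le]
        rintro _ ⟨i, rfl⟩
        change A ((A ^ (i : ℕ)) y) ∈ K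
        rw [← Module.End.mul_apply, ← pow_succ']
        by_cases h : (i : ℕ) + 1 = r
        · rw [h]; exact hmem'
        · exact Submodule.subset_span ⟨⟨i + 1, by omega⟩, rfl⟩
      have hK0 := hs K hKU hKinv
      rcases Nat.eq_zero_or_pos r with h | h
      · subst h
        rw [hK0] at hmem'
        exact hy0 (by simpa using hmem')
      · have : y ∈ K := Submodule.subset_span ⟨⟨0, h⟩, by simp⟩
        rw [hK0] at this
        exact hy0 (by simpa using this)
  exact main _ le_rfl

end N
section C
variable {F V M : Type*} [Field F] [AddCommGroup V] [Module F V] [AddCommGroup M] [Module F M]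

/-- intertwining isomorphisms -/
def Intertw (A : M →ₗ[F] M) (U : Submodule F M) (N : V →ₗ[F] V) (φ : M ≃ₗ[F] V) : Prop :=
  ∀ u ∈ U, φ (A u) = N (φ u)

open Classical in
lemma card_inter_base [Fintype F] [Fintype V] [Fintype M] [Fintype (M ≃ₗ[F] V)]
    {N : V →ₗ[F] V} {p : ℕ} (hp : Module.finrank F V = p + 1) (hpM : Module.finrank F M = p + 1)
    (h0 : N ^ (p + 1) = 0) {z : V} (hz : (N ^ p) z ≠ 0)
    (A : M →ₗ[F] M) (U : Submodule F M) (hU : Module.finrank F U = p) (hs : SimpleOn A U) :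
    (Finset.univ.filter (fun φ : M ≃ₗ[F] V => Intertw A U N φ)).card
      = Fintype.card F ^ (p + 1) - Fintype.card F ^ p := by
  obtain ⟨y, hy, hyU⟩ := exists_cyclic hpM A U hU hs
  let b := basisOfLinearIndependentOfCardEqFinrank hy (by simp [hpM])
  have hb : ∀ i, b i = (A ^ (i : ℕ)) y := fun i => by simp [b]
  have hpow : ∀ φ : M ≃ₗ[F] V, Intertw A U N φ → ∀ i ≤ p, φ ((A ^ i) y) = (N ^ i) (φ y) := by
    intro φ hφ i
    induction i with
    | zero => simp
    | succ i ih =>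
      intro hi
      rw [pow_succ', Module.End.mul_apply, hφ _ (hyU i (by omega)), ih (by omega), pow_succ',
        Module.End.mul_apply]
  rw [← nil_card hp h0 hz]
  apply Finset.card_bij (fun φ _ => φ y)
  · intro φ hφ
    simp only [Finset.mem_filter, Finset.mem_univ, true_and] at hφ ⊢
    rw [← hpow φ hφ p le_rfl]
    have := hy.ne_zero (Fin.last p)
    simpa using this
  · intro φ hφ ψ hψ h
    simp only [Finset.mem_filter, Finset.mem_univ, true_and] at hφ hψ
    apply b.ext'
    intro i
    rw [hb, hpow φ hφ i (by omega), hpow ψ hψ i (by omega), h]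
  · intro x hx
    simp only [Finset.mem_filter, Finset.mem_univ, true_and] at hx
    let c := basisOfLinearIndependentOfCardEqFinrank (nil_indep h0 hx) (by simp [hp])
    have hc : ∀ i, c i = (N ^ (i : ℕ)) x := fun i => by simp [c]
    let φ := b.equiv c (Equiv.refl _)
    have hφ : ∀ i (_ : i ≤ p), φ ((A ^ i) y) = (N ^ i) x := by
      intro i hi
      have h1 := hb ⟨i, by omega⟩
      have h2 := hc ⟨i, by omega⟩
      simp only at h1 h2
      rw [← h1, ← h2]
      simp [φ]
    refine ⟨φ, ?_, ?_⟩
    · simp only [Finset.mem_filter, Finset.mem_univ, true_and]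
      have hspan : Submodule.span F (Set.range (fun i : Fin p => (A ^ (i : ℕ)) y)) = U := by
        apply Submodule.eq_of_le_of_finrank_eq
        · rw [Submodule.span_le]
          rintro _ ⟨i, rfl⟩
          exact hyU i i.2
        · rw [finrank_span_eq_card, hU, Fintype.card_fin]
          exact hy.comp (Fin.castSucc) (Fin.castSucc_injective _)
      have : U ≤ LinearMap.eqLocus (φ.toLinearMap ∘ₗ A) (N ∘ₗ φ.toLinearMap) := by
        rw [← hspan, Submodule.span_le]
        rintro _ ⟨i, rfl⟩
        change φ (A ((A ^ (i : ℕ)) y)) = N (φ ((A ^ (i : ℕ)) y))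
        rw [← Module.End.mul_apply, ← pow_succ', hφ _ (by omega), hφ _ (by omega), pow_succ',
          Module.End.mul_apply]
      intro u hu
      exact this hu
    · simpa using hφ 0 (by omega)

lemma bad_iff_mem [FiniteDimensional F V] {N : V →ₗ[F] V} {p : ℕ}
    (hp : Module.finrank F V = p + 1)
    (h0 : N ^ (p + 1) = 0) {z : V} (hz : (N ^ p) z ≠ 0)
    (A : M →ₗ[F] M) (U : Submodule F M) (hs : SimpleOn A U) (φ : M ≃ₗ[F] V) (hφ : Intertw A U N φ) :
    φ.symm ((N ^ p) z) ∉ U ∧ ∀ u' ∉ U, (BadExt A U u' (φ.symm (N (φ u'))) ↔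
      u' ∈ U ⊔ Submodule.span F {φ.symm ((N ^ p) z)}) := by
  set t := (N ^ p) z with ht
  have hNt : N t = 0 := by
    rw [ht, ← Module.End.mul_apply, ← pow_succ', h0]; rfl
  have hl0 : φ.symm t ≠ 0 := by simpa using hz
  have hnot : φ.symm t ∉ U := by
    intro hmem
    have h1 := hs (Submodule.span F {φ.symm t}) (by
      rwa [Submodule.span_singleton_le_iff_mem]) (by
      intro x hx
      obtain ⟨a, rfl⟩ := Submodule.mem_span_singleton.1 hx
      have : φ (A (φ.symm t)) = 0 := by rw [hφ _ hmem]; simpa using hNt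
      have : A (φ.symm t) = 0 := by simpa using this
      rw [map_smul, this, smul_zero]
      exact Submodule.zero_mem _)
    rw [Submodule.span_singleton_eq_bot] at h1
    exact hl0 h1
  refine ⟨hnot, fun u' hu' => ?_⟩
  have hlin : ∀ (a : F), ∀ u ∈ U, φ (a • φ.symm (N (φ u')) + A u) = N (φ (a • u' + u)) := by
    intro a u hu
    rw [map_add, map_smul, hφ u hu]
    simp
  constructor
  · rintro ⟨K, hK0, hK, hinv⟩
    have h1 := nil_mem hp h0 hz (K.map φ.toLinearMap) (by
      rw [Ne, Submodule.map_eq_bot_iff]; exact hK0) (by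
      rintro _ ⟨x, hx, rfl⟩
      obtain ⟨a, u, hu, rfl⟩ := mem_sup_sing.1 (hK hx)
      exact ⟨_, hinv a u hu hx, hlin a u hu⟩)
    obtain ⟨x, hx, hxt⟩ := h1
    have hxt' : φ.symm t = x := by rw [LinearEquiv.symm_apply_eq]; exact hxt.symm
    obtain ⟨a, u, hu, e⟩ := mem_sup_sing.1 (hK hx)
    have ha : a ≠ 0 := by
      rintro rfl
      apply hnot
      rw [hxt', ← e]
      simpa using hu
    refine mem_sup_sing.2 ⟨a⁻¹, -(a⁻¹ • u), U.neg_mem (U.smul_mem _ hu), ?_⟩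
    rw [hxt', ← e, smul_add, smul_smul, inv_mul_cancel₀ ha]
    simp
  · intro h
    obtain ⟨a, u, hu, e⟩ := mem_sup_sing.1 h
    have ha : a ≠ 0 := by
      rintro rfl
      apply hu'
      rw [← e]; simpa using hu
    refine ⟨Submodule.span F {φ.symm t}, ?_, ?_, ?_⟩
    · rw [Ne, Submodule.span_singleton_eq_bot]; exact hl0
    · rw [Submodule.span_singleton_le_iff_mem]
      refine mem_sup_sing.2 ⟨a⁻¹, -(a⁻¹ • u), U.neg_mem (U.smul_mem _ hu), ?_⟩
      rw [← e, smul_add, smul_smul, inv_mul_cancel₀ ha]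
      simp
    · intro b w hw hmem
      obtain ⟨s, hs'⟩ := Submodule.mem_span_singleton.1 hmem
      have : φ (b • φ.symm (N (φ u')) + A w) = 0 := by
        rw [hlin b w hw, ← hs']
        simp [hNt]
      rw [LinearEquiv.map_eq_zero_iff] at this
      rw [this]
      exact Submodule.zero_mem _

open Classical in
lemma card_inter [Fintype F] [Fintype V] [Fintype M] [Fintype (M ≃ₗ[F] V)]
    {N : V →ₗ[F] V} {p : ℕ} (hp : Module.finrank F V = p + 1) (hpM : Module.finrank F M = p + 1)
    (h0 : N ^ (p + 1) = 0) {z : V} (hz : (N ^ p) z ≠ 0) :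
    ∀ (k : ℕ) (A : M →ₗ[F] M) (U : Submodule F M), Module.finrank F U + k = p → SimpleOn A U →
    (Finset.univ.filter (fun φ : M ≃ₗ[F] V => Intertw A U N φ)).card
      = ∏ j ∈ Finset.range (k + 1), (Fintype.card F ^ (p + 1) - Fintype.card F ^ (p - j)) := by
  intro k
  induction k with
  | zero =>
    intro A U hU hs
    rw [card_inter_base hp hpM h0 hz A U hU hs]
    simp
  | succ k ih =>
    intro A U hU hs
    set q := Fintype.card F with hq
    have hq1 : 1 < q := Fintype.one_lt_card
    have := Finset.card_mul_eq_card_mul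
      (fun (φ : M ≃ₗ[F] V) (u' : M) => ¬ BadExt A U u' (φ.symm (N (φ u'))))
      (s := Finset.univ.filter (fun φ : M ≃ₗ[F] V => Intertw A U N φ))
      (t := Finset.univ.filter (fun u' : M => u' ∉ U))
      (m := q ^ (p + 1) - q ^ (p - k))
      (n := (q ^ (p + 1) - q ^ (p - k)) *
        ∏ j ∈ Finset.range (k + 1), (q ^ (p + 1) - q ^ (p - j))) ?_ ?_
    · rw [card_not_mem, hpM, ← hq] at this
      rw [Finset.prod_range_succ]
      have hpos : 0 < q ^ (p + 1) - q ^ (p - k) := by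
        have : q ^ (p - k) < q ^ (p + 1) := Nat.pow_lt_pow_right hq1 (by omega)
        omega
      apply Nat.eq_of_mul_eq_mul_right hpos
      rw [this]
      have : Module.finrank F U = p - (k + 1) := by omega
      rw [this]
      ring
    · intro φ hφ
      simp only [Finset.mem_filter, Finset.mem_univ, true_and] at hφ
      obtain ⟨hl, hbad⟩ := bad_iff_mem hp h0 hz A U hs φ hφ
      have hr : Module.finrank F (U ⊔ Submodule.span F {φ.symm ((N ^ p) z)} : Submodule F M)
          = p - k := by
        rw [Submodule.finrank_sup_span_singleton hl]; omega
      rw [← hpM, ← hr, hq, ← card_not_mem]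
      congr 1
      ext u'
      simp only [Finset.mem_bipartiteAbove, Finset.mem_filter, Finset.mem_univ, true_and]
      constructor
      · rintro ⟨h1, h2⟩
        rwa [← hbad u' h1]
      · intro h
        have h1 : u' ∉ U := fun h' => h (Submodule.mem_sup_left h')
        exact ⟨h1, by rwa [hbad u' h1]⟩
    · intro u' hu'
      simp only [Finset.mem_filter, Finset.mem_univ, true_and] at hu'
      obtain ⟨ξ, hξu, hξ⟩ := Submodule.exists_le_ker_of_notMem hu'
      have hgood : (Finset.univ.filter (fun v : M => ¬ BadExt A U u' v)).card
          = q ^ (p + 1) - q ^ (p - k) := by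
        have h1 := card_bad A _ U u' rfl hu' hs
        have h2 := Finset.card_filter_add_card_filter_not (s := (Finset.univ : Finset M))
          (fun v => BadExt A U u' v)
        have h3 : Module.finrank F U + 1 = p - k := by omega
        rw [h1, Finset.card_univ, Module.card_eq_pow_finrank (K := F) (V := M), hpM, h3, ← hq] at h2
        omega
      rw [Finset.card_eq_sum_card_fiberwise (f := fun φ : M ≃ₗ[F] V => φ.symm (N (φ u')))
        (t := Finset.univ.filter (fun v : M => ¬ BadExt A U u' v))]
      · rw [← hgood, ← smul_eq_mul, ← Finset.sum_const]
        apply Finset.sum_congr rfl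
        intro v hv
        simp only [Finset.mem_filter, Finset.mem_univ, true_and] at hv
        let A' : M →ₗ[F] M := A + ξ.smulRight ((ξ u')⁻¹ • (v - A u'))
        have hA' : ∀ (a : F), ∀ u ∈ U, A' (a • u' + u) = a • v + A u := by
          intro a u hu
          have : ξ u = 0 := hξ hu
          simp only [A', LinearMap.add_apply, LinearMap.smulRight_apply, map_add, map_smul, this]
          rw [smul_smul, mul_inv_cancel₀ hξu]
          module
        have hs' : SimpleOn A' (U ⊔ Submodule.span F {u'}) := by
          intro K hK hinv
          by_contra hK0
          apply hv
          refine ⟨K, hK0, hK, ?_⟩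
          intro a u hu hmem
          rw [← hA' a u hu]
          exact hinv _ hmem
        rw [← ih A' (U ⊔ Submodule.span F {u'}) (by
          rw [Submodule.finrank_sup_span_singleton hu']; omega) hs']
        congr 1
        ext φ
        simp only [Finset.mem_bipartiteBelow, Finset.mem_filter, Finset.mem_univ, true_and]
        constructor
        · rintro ⟨⟨h1, h2⟩, h3⟩ x hx
          obtain ⟨a, u, hu, rfl⟩ := mem_sup_sing.1 hx
          rw [hA' a u hu, map_add, map_smul, h1 u hu, ← h3]
          simp
        · intro h
          have e1 : Intertw A U N φ := by
            intro u hu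
            have h1 := h u (Submodule.mem_sup_left hu)
            have h2 := hA' 0 u hu
            simp only [zero_smul, zero_add] at h2
            rwa [h2] at h1
          have e2 : φ.symm (N (φ u')) = v := by
            have h1 := h u' (Submodule.mem_sup_right (Submodule.mem_span_singleton_self _))
            have h2 := hA' 1 0 U.zero_mem
            simp only [one_smul, add_zero, map_zero] at h2
            rw [← h1, h2]
            simp
          exact ⟨⟨e1, by rwa [e2]⟩, e2⟩
      · intro φ hφ
        simp only [Finset.coe_filter, Finset.mem_bipartiteBelow, Finset.mem_filter,
          Finset.mem_univ, true_and, Finset.mem_coe, Set.mem_ofPred_eq] at hφ ⊢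
        exact hφ.2

end C
section D
variable {F V : Type*} [Field F] [AddCommGroup V] [Module F V]

lemma iSup_map_shift_le (R : Module.End F V) (c : F) (d : ℕ) (W : Submodule F V) :
    (⨆ i : Fin d, W.map ((R + algebraMap F (Module.End F V) c) ^ (i : ℕ))) ≤
      ⨆ i : Fin d, W.map (R ^ (i : ℕ)) := by
  apply iSup_le
  rintro i _ ⟨w, hw, rfl⟩
  have hc : Commute R (algebraMap F (Module.End F V) c) := (Algebra.commutes c R).symm
  rw [hc.add_pow, LinearMap.sum_apply]
  apply Submodule.sum_mem
  intro k hk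
  have hk' : k < d := by
    have := Finset.mem_range.1 hk
    omega
  refine Submodule.mem_iSup_of_mem (⟨k, hk'⟩ : Fin d) ?_
  refine ⟨(c ^ ((i : ℕ) - k)) • ((((i : ℕ).choose k : ℕ) : F) • w),
    W.smul_mem _ (W.smul_mem _ hw), ?_⟩
  rw [mul_assoc, Module.End.mul_apply, Module.End.mul_apply, ← map_pow,
    Module.algebraMap_end_apply, Module.End.natCast_apply, Nat.cast_smul_eq_nsmul]

lemma split_iff [FiniteDimensional F V] (T : V →ₗ[F] V) (c : F) {m d : ℕ}
    (hdim : Module.finrank F V = m * d) (W : Submodule F V) :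
    IsSplittingSubspace T m d W ↔ Module.finrank F W = m ∧
      (⨆ i : Fin d, W.map ((T - algebraMap F (Module.End F V) c : Module.End F V) ^ (i : ℕ))) = ⊤ := by
  set N : Module.End F V := T - algebraMap F (Module.End F V) c with hN
  have hsup : (⨆ i : Fin d, W.map (T ^ (i : ℕ))) = ⨆ i : Fin d, W.map (N ^ (i : ℕ)) := by
    apply le_antisymm
    · have := iSup_map_shift_le N c d W
      have e : N + algebraMap F (Module.End F V) c = T := by simp [hN]
      rwa [e] at this
    · have := iSup_map_shift_le (T : Module.End F V) (-c) d W
      have e : (T : Module.End F V) + algebraMap F (Module.End F V) (-c) = N := by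
        rw [map_neg, hN, sub_eq_add_neg]
      rwa [e] at this
  unfold IsSplittingSubspace
  rw [hsup]
  refine ⟨fun h => ⟨h.1, h.2.2⟩, fun h => ⟨h.1, ?_, h.2⟩⟩
  obtain ⟨hW, htop⟩ := h
  rw [← hsup] at htop
  apply iSupIndep_of_dfinsupp_lsum_injective
  set L := (DFinsupp.lsum ℕ) fun i : Fin d => (W.map (T ^ (i : ℕ))).subtype with hL
  have hsurj : Function.Surjective L := by
    rw [← LinearMap.range_eq_top, hL, ← Submodule.iSup_eq_range_dfinsupp_lsum]
    exact htop
  have hr := LinearMap.finrank_range_add_finrank_ker L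
  rw [LinearMap.range_eq_top.2 hsurj, finrank_top, hdim] at hr
  have hle : Module.finrank F (Π₀ i : Fin d, W.map (T ^ (i : ℕ))) ≤ m * d := by
    have := Module.finrank_directSum (R := F) (fun i : Fin d => W.map (T ^ (i : ℕ)))
    refine (le_of_eq this).trans ?_
    calc _ ≤ ∑ i : Fin d, m := Finset.sum_le_sum (fun i _ => by
            rw [← hW]; exact Submodule.finrank_map_le _ _)
      _ = m * d := by simp [mul_comm]
  have : Module.finrank F (LinearMap.ker L) = 0 := by omega
  rw [Submodule.finrank_eq_zero] at this
  exact LinearMap.ker_eq_bot.1 this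

/-- the block shift -/
def bshift (F : Type*) [Field F] (m e : ℕ) : (Fin (e + 1) → Fin m → F) →ₗ[F] (Fin (e + 1) → Fin m → F) where
  toFun x := Fin.cons 0 (fun i : Fin e => x i.castSucc)
  map_add' x y := by
    ext i
    refine Fin.cases ?_ (fun i => ?_) i <;> simp
  map_smul' a x := by
    ext i
    refine Fin.cases ?_ (fun i => ?_) i <;> simp

def bU (F : Type*) [Field F] (m e : ℕ) : Submodule F (Fin (e + 1) → Fin m → F) :=
  LinearMap.ker (LinearMap.proj (R := F) (φ := fun _ : Fin (e + 1) => Fin m → F) (Fin.last e))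

lemma mem_bU {m e : ℕ} {x : Fin (e + 1) → Fin m → F} : x ∈ bU F m e ↔ x (Fin.last e) = 0 := Iff.rfl

lemma bshift_simple (m e : ℕ) : SimpleOn (bshift F m e) (bU F m e) := by
  intro K hK hinv
  have key : ∀ j : ℕ, ∀ x ∈ K, ∀ i : Fin (e + 1), (i : ℕ) + j = e → x i = 0 := by
    intro j
    induction j with
    | zero =>
      intro x hx i hi
      have : i = Fin.last e := Fin.ext (by simpa using hi)
      rw [this]
      exact mem_bU.1 (hK hx)
    | succ j ih =>
      intro x hx i hi
      have := ih _ (hinv x hx) (Fin.succ ⟨i, by omega⟩) (by simp; omega)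
      exact this
  rw [eq_bot_iff]
  intro x hx
  rw [Submodule.mem_bot]
  ext1 i
  exact key (e - i) x hx i (by omega)

lemma finrank_bU (m e : ℕ) : Module.finrank F (bU F m e) = m * e := by
  have h := LinearMap.finrank_range_add_finrank_ker
    (LinearMap.proj (R := F) (φ := fun _ : Fin (e + 1) => Fin m → F) (Fin.last e))
  rw [LinearMap.range_eq_top.2 (LinearMap.proj_surjective _), finrank_top] at h
  have h2 : Module.finrank F (Fin (e + 1) → Fin m → F) = m * e + m := by
    rw [Module.finrank_pi_fintype]; simp; ring
  rw [h2] at h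
  simp only [Module.finrank_fintype_fun_eq_card, Fintype.card_fin] at h
  change m + Module.finrank F (bU F m e) = _ at h
  omega

/-- the map associated to a frame -/
noncomputable def bPhi (N : Module.End F V) {m : ℕ} (e : ℕ) (g : (Fin m → F) →ₗ[F] V) :
    (Fin (e + 1) → Fin m → F) →ₗ[F] V :=
  ∑ i : Fin (e + 1), (N ^ (i : ℕ)) ∘ₗ g ∘ₗ LinearMap.proj i

lemma bPhi_apply (N : Module.End F V) {m : ℕ} (e : ℕ) (g : (Fin m → F) →ₗ[F] V)
    (x : Fin (e + 1) → Fin m → F) : bPhi N e g x = ∑ i : Fin (e + 1), (N ^ (i : ℕ)) (g (x i)) := by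
  simp [bPhi]

lemma bPhi_inter (N : Module.End F V) {m : ℕ} (e : ℕ) (g : (Fin m → F) →ₗ[F] V)
    (u : Fin (e + 1) → Fin m → F) (hu : u ∈ bU F m e) :
    bPhi N e g (bshift F m e u) = N (bPhi N e g u) := by
  rw [mem_bU] at hu
  rw [bPhi_apply, bPhi_apply, Fin.sum_univ_succ, Fin.sum_univ_castSucc, hu]
  simp [bshift, pow_succ']

lemma bPhi_single (N : Module.End F V) {m : ℕ} (e : ℕ) (g : (Fin m → F) →ₗ[F] V)
    (i : Fin (e + 1)) (a : Fin m → F) :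
    bPhi N e g (Pi.single i a) = (N ^ (i : ℕ)) (g a) := by
  rw [bPhi_apply, Finset.sum_eq_single i]
  · simp
  · intro j _ hj
    simp [Pi.single_eq_of_ne hj]
  · simp

lemma bPhi_range (N : Module.End F V) {m : ℕ} (e : ℕ) (g : (Fin m → F) →ₗ[F] V) :
    LinearMap.range (bPhi N e g) = ⨆ i : Fin (e + 1), (LinearMap.range g).map (N ^ (i : ℕ)) := by
  apply le_antisymm
  · rintro _ ⟨x, rfl⟩
    rw [bPhi_apply]
    apply Submodule.sum_mem
    intro i _
    exact Submodule.mem_iSup_of_mem i ⟨_, ⟨_, rfl⟩, rfl⟩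
  · apply iSup_le
    rintro i _ ⟨_, ⟨a, rfl⟩, rfl⟩
    exact ⟨Pi.single i a, bPhi_single N e g i a⟩

lemma bshift_single {m e : ℕ} (i : ℕ) (hi : i + 1 < e + 1) (a : Fin m → F) :
    bshift F m e (Pi.single ⟨i, by omega⟩ a) = Pi.single ⟨i + 1, hi⟩ a := by
  ext1 j
  refine Fin.cases ?_ (fun j => ?_) j
  · rw [Pi.single_eq_of_ne (by intro h; simp [Fin.ext_iff] at h)]
    simp [bshift]
  · by_cases h : (j : ℕ) = i
    · have h1 : j.castSucc = ⟨i, by omega⟩ := Fin.ext h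
      have h2 : j.succ = ⟨i + 1, hi⟩ := Fin.ext (by simp [h])
      rw [h2, Pi.single_eq_same, ← h2]
      simp [bshift, h1]
    · rw [Pi.single_eq_of_ne (by intro h'; simp [Fin.ext_iff] at h'; exact h h')]
      simp only [bshift, LinearMap.coe_mk, AddHom.coe_mk, Fin.cons_succ]
      rw [Pi.single_eq_of_ne (by intro h'; simp [Fin.ext_iff] at h'; exact h h')]

lemma inter_eq_bPhi (N : Module.End F V) {m e : ℕ} (φ : (Fin (e + 1) → Fin m → F) ≃ₗ[F] V)
    (hφ : Intertw (bshift F m e) (bU F m e) N φ) :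
    φ.toLinearMap = bPhi N e (φ.toLinearMap ∘ₗ LinearMap.single F (fun _ => Fin m → F) 0) := by
  apply LinearMap.pi_ext
  intro i a
  rw [bPhi_single]
  obtain ⟨i, hi⟩ := i
  induction i with
  | zero => simp
  | succ i ih =>
    rw [← bshift_single i hi a]
    have hmem : Pi.single ⟨i, by omega⟩ a ∈ bU F m e := by
      rw [mem_bU, Pi.single_eq_of_ne]
      intro h
      simp [Fin.ext_iff] at h
      omega
    have h1 := hφ _ hmem
    have h2 := ih (by omega)
    simp only [LinearEquiv.coe_coe] at h2 ⊢
    rw [h1, h2, pow_succ', Module.End.mul_apply]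

end D
open Classical in
lemma card_fiber {F V : Type*} [Field F] [Fintype F] [AddCommGroup V] [Module F V] [Fintype V]
    {m e : ℕ} [Fintype ((Fin (e + 1) → Fin m → F) ≃ₗ[F] V)]
    (hdim : Module.finrank F V = m * (e + 1)) (N : Module.End F V) (W : Submodule F V)
    (hW : Module.finrank F W = m) (htop : (⨆ i : Fin (e + 1), W.map (N ^ (i : ℕ))) = ⊤) :
    (Finset.univ.filter (fun φ : (Fin (e + 1) → Fin m → F) ≃ₗ[F] V =>
      Intertw (bshift F m e) (bU F m e) N φ ∧
      LinearMap.range (φ.toLinearMap ∘ₗ LinearMap.single F (fun _ => Fin m → F) 0) = W)).card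
      = ∏ i : Fin m, (Fintype.card F ^ m - Fintype.card F ^ (i : ℕ)) := by
  have h1 := card_linearIndependent (K := F) (V := W) (k := m) hW.ge
  rw [hW] at h1
  rw [← h1, Nat.card_eq_fintype_card, ← Finset.card_univ]
  have hmem : ∀ φ : (Fin (e + 1) → Fin m → F) ≃ₗ[F] V,
      LinearMap.range (φ.toLinearMap ∘ₗ LinearMap.single F (fun _ => Fin m → F) 0) = W →
      ∀ j : Fin m, φ (Pi.single 0 (Pi.single j 1)) ∈ W := by
    intro φ h j
    rw [← h]
    exact ⟨Pi.single j 1, rfl⟩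
  apply Finset.card_bij (fun φ hφ =>
    (⟨fun j => ⟨φ (Pi.single 0 (Pi.single j 1)), hmem φ (Finset.mem_filter.1 hφ).2.2 j⟩, by
      apply LinearIndependent.of_comp W.subtype
      have hb : LinearIndependent F (fun j : Fin m => (Pi.single j 1 : Fin m → F)) := by
        convert (Pi.basisFun F (Fin m)).linearIndependent using 2
        simp
      have := hb.map' (φ.toLinearMap ∘ₗ LinearMap.single F (fun _ => Fin m → F) 0) (by
        rw [LinearMap.ker_eq_bot]
        exact φ.injective.comp (Pi.single_injective (M := fun _ => Fin m → F) 0))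
      exact this⟩ : {s : Fin m → W // LinearIndependent F s}))
  · intro _ _; exact Finset.mem_univ _
  · intro φ hφ ψ hψ h
    have hφ := (Finset.mem_filter.1 hφ).2
    have hψ := (Finset.mem_filter.1 hψ).2
    have e : φ.toLinearMap ∘ₗ LinearMap.single F (fun _ => Fin m → F) 0
        = ψ.toLinearMap ∘ₗ LinearMap.single F (fun _ => Fin m → F) 0 := by
      apply (Pi.basisFun F (Fin m)).ext
      intro j
      have := congrArg Subtype.val (congrFun (congrArg Subtype.val h) j)
      simpa using this
    apply LinearEquiv.toLinearMap_injective
    rw [inter_eq_bPhi N φ hφ.1, inter_eq_bPhi N ψ hψ.1, e]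
  · rintro ⟨s, hs⟩ _
    let b := basisOfLinearIndependentOfCardEqFinrank' (b := s) hs (by simp [hW])
    have hb : ∀ j, b j = s j := fun j => by simp [b]
    let g : (Fin m → F) →ₗ[F] V := W.subtype ∘ₗ b.equivFun.symm.toLinearMap
    have hg : LinearMap.range g = W := by
      rw [LinearMap.range_comp, LinearEquiv.range, Submodule.map_top, Submodule.range_subtype]
    have hsurj : Function.Surjective (bPhi N e g) := by
      rw [← LinearMap.range_eq_top, bPhi_range, hg, htop]
    have hrk : Module.finrank F (Fin (e + 1) → Fin m → F) = Module.finrank F V := by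
      rw [hdim, Module.finrank_pi_fintype]; simp; ring
    have hinj := (LinearMap.injective_iff_surjective_of_finrank_eq_finrank hrk).2 hsurj
    let φ := LinearEquiv.ofBijective (bPhi N e g) ⟨hinj, hsurj⟩
    have hφ : ∀ x, φ x = bPhi N e g x := fun x => rfl
    have hφg : φ.toLinearMap ∘ₗ LinearMap.single F (fun _ => Fin m → F) 0 = g := by
      apply LinearMap.ext
      intro a
      change bPhi N e g (Pi.single 0 a) = g a
      rw [bPhi_single]; simp
    refine ⟨φ, ?_, ?_⟩
    · rw [Finset.mem_filter]
      refine ⟨Finset.mem_univ _, ?_, ?_⟩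
      · intro u hu
        rw [hφ, hφ]
        exact bPhi_inter N e g u hu
      · rw [hφg, hg]
    · apply Subtype.ext
      funext j
      apply Subtype.ext
      change bPhi N e g (Pi.single 0 (Pi.single j 1)) = s j
      rw [bPhi_single]
      simp [g, ← hb]

/-- if `T` is cyclic with minimal polynomial `(x − c)^{md}` (cyclic and
primary for a linear polynomial), then `σ(m,d;T) = q^{m²(d−1)}`. -/
theorem splitCount_cyclic_linear_primary (F V : Type*) [Field F] [Fintype F]
    [AddCommGroup V] [Module F V] [FiniteDimensional F V]
    (m d : ℕ) (hm : 0 < m) (hd : 0 < d) (hdim : Module.finrank F V = m * d)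
    (T : V →ₗ[F] V) (hcyc : IsCyclicOp T) (c : F)
    (hmin : minpoly F (T : Module.End F V) = (Polynomial.X - Polynomial.C c) ^ (m * d)) :
    splitCount T m d = Fintype.card F ^ (m ^ 2 * (d - 1)) := by
  classical
  obtain ⟨e, rfl⟩ : ∃ e, d = e + 1 := ⟨d - 1, by omega⟩
  obtain ⟨k, rfl⟩ : ∃ k, m = k + 1 := ⟨m - 1, by omega⟩
  have : Finite V := Module.finite_of_finite F
  let : Fintype V := Fintype.ofFinite V
  have : Finite ((Fin (e + 1) → Fin (k + 1) → F) ≃ₗ[F] V) := DFunLike.finite _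
  let : Fintype ((Fin (e + 1) → Fin (k + 1) → F) ≃ₗ[F] V) := Fintype.ofFinite _
  let : Fintype (Submodule F V) := Fintype.ofFinite _
  obtain ⟨p, hp⟩ : ∃ p, (k + 1) * (e + 1) = p + 1 := ⟨(k + 1) * (e + 1) - 1, by
    have : 0 < (k + 1) * (e + 1) := by positivity
    omega⟩
  set N : Module.End F V := T - algebraMap F (Module.End F V) c with hN
  have haev : ∀ r : ℕ, Polynomial.aeval (T : Module.End F V)
      ((Polynomial.X - Polynomial.C c) ^ r) = N ^ r := by
    intro r
    simp [hN]
  have h0 : N ^ (p + 1) = 0 := by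
    rw [← haev, ← hp, ← hmin]
    exact minpoly.aeval _ _
  have hne : N ^ p ≠ 0 := by
    intro h
    rw [← haev] at h
    have hd := minpoly.dvd F (T : Module.End F V) h
    rw [hmin, hp] at hd
    have := (pow_dvd_pow_iff (Polynomial.X_sub_C_ne_zero c)
      (Polynomial.not_isUnit_X_sub_C c)).1 hd
    omega
  obtain ⟨z, hz⟩ : ∃ z, (N ^ p) z ≠ 0 := by
    by_contra hcon
    push Not at hcon
    exact hne (LinearMap.ext hcon)
  have hpM : Module.finrank F (Fin (e + 1) → Fin (k + 1) → F) = p + 1 := by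
    rw [← hp, Module.finrank_pi_fintype]; simp; ring
  have hcount := card_inter (hdim.trans hp) hpM h0 hz k (bshift F (k + 1) e) (bU F (k + 1) e)
    (by rw [finrank_bU]; have : (k + 1) * (e + 1) = (k + 1) * e + (k + 1) := by ring
        omega) (bshift_simple _ _)
  set q := Fintype.card F with hq
  have hq1 : 1 < q := Fintype.one_lt_card
  have hfib : (Finset.univ.filter (fun φ : (Fin (e + 1) → Fin (k + 1) → F) ≃ₗ[F] V =>
      Intertw (bshift F (k + 1) e) (bU F (k + 1) e) N φ)).card =
      (Finset.univ.filter (fun W : Submodule F V => IsSplittingSubspace T (k + 1) (e + 1) W)).card *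
        ∏ i : Fin (k + 1), (q ^ (k + 1) - q ^ (i : ℕ)) := by
    rw [Finset.card_eq_sum_card_fiberwise
      (f := fun φ : (Fin (e + 1) → Fin (k + 1) → F) ≃ₗ[F] V =>
        LinearMap.range (φ.toLinearMap ∘ₗ LinearMap.single F (fun _ => Fin (k + 1) → F) 0))
      (t := Finset.univ.filter (fun W : Submodule F V =>
        IsSplittingSubspace T (k + 1) (e + 1) W))]
    · rw [← smul_eq_mul, ← Finset.sum_const]
      apply Finset.sum_congr rfl
      intro W hW
      rw [Finset.mem_filter, split_iff T c hdim] at hW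
      rw [← card_fiber hdim N W hW.2.1 hW.2.2, Finset.filter_filter]
    · intro φ hφ
      have hφ := (Finset.mem_filter.1 (Finset.mem_coe.1 hφ)).2
      rw [Finset.mem_coe, Finset.mem_filter, split_iff T c hdim]
      refine ⟨Finset.mem_univ _, ?_, ?_⟩
      · rw [LinearMap.finrank_range_of_inj]
        · simp
        · exact φ.injective.comp
            (Pi.single_injective (M := fun _ => Fin (k + 1) → F) 0)
      · rw [← hN, ← bPhi_range, ← inter_eq_bPhi N φ hφ]
        exact φ.range
  have hsplit : splitCount T (k + 1) (e + 1) =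
      (Finset.univ.filter (fun W : Submodule F V =>
        IsSplittingSubspace T (k + 1) (e + 1) W)).card := by
    unfold splitCount
    rw [Set.ncard_eq_toFinset_card']
    congr 1
    ext W
    simp
  rw [hsplit]
  have hpos : 0 < ∏ i : Fin (k + 1), (q ^ (k + 1) - q ^ (i : ℕ)) := by
    apply Finset.prod_pos
    intro i _
    have : q ^ (i : ℕ) < q ^ (k + 1) := Nat.pow_lt_pow_right hq1 i.2
    omega
  apply Nat.eq_of_mul_eq_mul_right hpos
  rw [← hfib, hcount]
  have hpe : p = (k + 1) * e + k := by
    have : (k + 1) * (e + 1) = (k + 1) * e + k + 1 := by ring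
    omega
  rw [Fin.prod_univ_eq_prod_range (fun i => q ^ (k + 1) - q ^ i) (k + 1),
    ← Finset.prod_range_reflect]
  have hexp : q ^ ((k + 1) ^ 2 * (e + 1 - 1)) = ∏ j ∈ Finset.range (k + 1), q ^ ((k + 1) * e) := by
    rw [Finset.prod_const, Finset.card_range, ← pow_mul]
    congr 1
    simp; ring
  rw [hexp, ← Finset.prod_mul_distrib]
  apply Finset.prod_congr rfl
  intro j hj
  have hj := Finset.mem_range.1 hj
  rw [Nat.mul_sub, ← pow_add, ← pow_add]
  congr 2 <;> omega
end

section
/- Let m, d be positive integers and q a prime power. The number of invertible md × md matrices M over F_q of the following form equals γ_m(q) · q^{m^2(d−1)}: there exist scalars a_{i,l} ∈ F_q for 1 ≤ i ≤ md, 1 ≤ l ≤ m such that for 0 ≤ j ≤ d−1 and 1 ≤ l ≤ m, the (jm + l)-th column of M has entries M_{i, jm+l} = a_{i−j, l} when i > j and M_{i, jm+l} = 0 when i ≤ j (i.e., each successive block of m columns is the first block of m columns shifted down by one row, with zeros filling the top). -/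
open Polynomial

namespace BlockShift

set_option linter.unusedSectionVars false

variable {F : Type*} [Field F] {ι : Type*} [Fintype ι] [DecidableEq ι]

/-- independence condition -/
def P (d : ι → ℕ) (n : ℕ) (f : ι → F[X]) : Prop :=
  ∀ g : ι → F[X], (∀ k, (g k).degree < d k) → X ^ n ∣ ∑ k, g k * f k → g = 0

/-- polynomial with given coefficients -/
noncomputable def toP {N : ℕ} (v : Fin N → F) : F[X] := ∑ i, C (v i) * X ^ (i : ℕ)

lemma toP_cons {N : ℕ} (a : F) (v : Fin N → F) :
    toP (Fin.cons a v : Fin (N+1) → F) = C a + X * toP v := by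
  simp only [toP, Fin.sum_univ_succ, Finset.mul_sum]
  simp only [Fin.cons_zero, Fin.cons_succ, Fin.val_zero, pow_zero, mul_one, Fin.val_succ]
  congr 1
  refine Finset.sum_congr rfl fun i _ => by ring

lemma toP_snoc {N : ℕ} (a : F) (v : Fin N → F) :
    toP (Fin.snoc v a : Fin (N+1) → F) = toP v + C a * X ^ N := by
  simp [toP, Fin.sum_univ_castSucc]

lemma toP_coeff {N : ℕ} (v : Fin N → F) (i : ℕ) :
    (toP v).coeff i = if h : i < N then v ⟨i, h⟩ else 0 := by
  simp only [toP, finsetSum_coeff, coeff_C_mul_X_pow]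
  split_ifs with h
  · rw [Finset.sum_eq_single (⟨i, h⟩ : Fin N)]
    · simp
    · intro b _ hb
      rw [if_neg]
      intro h'
      exact hb (Fin.ext h'.symm)
    · simp
  · apply Finset.sum_eq_zero
    intro b _
    rw [if_neg]
    intro h'
    exact h (h' ▸ b.2)

lemma toP_degree {N : ℕ} (v : Fin N → F) : (toP v).degree < N := by
  rw [degree_lt_iff_coeff_zero]
  intro i hi
  rw [toP_coeff, dif_neg (by omega)]

lemma toP_sub_smul {N : ℕ} (v w : Fin N → F) (a : F) :
    toP (v - a • w) = toP v - C a * toP w := by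
  simp [toP, Finset.mul_sum, ← Finset.sum_sub_distrib, sub_mul, mul_assoc]

lemma toP_injective {N : ℕ} : Function.Injective (toP : (Fin N → F) → F[X]) := by
  intro v w h
  ext i
  have := congrArg (fun p => p.coeff i) h
  simpa [toP_coeff] using this

lemma P_congr (d : ι → ℕ) (n : ℕ) (f f' : ι → F[X])
    (h : ∀ k, 0 < d k → X ^ n ∣ f k - f' k) : P d n f ↔ P d n f' := by
  have key : ∀ g : ι → F[X], (∀ k, (g k).degree < d k) →
      X ^ n ∣ ∑ k, g k * f k - ∑ k, g k * f' k := by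
    intro g hg
    rw [← Finset.sum_sub_distrib]
    refine Finset.dvd_sum fun k _ => ?_
    rw [← mul_sub]
    rcases Nat.eq_zero_or_pos (d k) with h0 | h0
    · have := hg k
      rw [h0] at this
      have : g k = 0 := by
        rw [← degree_eq_bot]; simpa using this
      simp [this]
    · exact Dvd.dvd.mul_left (h k h0) _
  constructor
  · intro H g hg hd
    exact H g hg ((dvd_iff_dvd_of_dvd_sub (key g hg)).2 hd)
  · intro H g hg hd
    exact H g hg ((dvd_iff_dvd_of_dvd_sub (key g hg)).1 hd)

/-- The key recursion. -/
lemma P_step (d : ι → ℕ) (n : ℕ) (l : ι) (hl : 0 < d l) (c : ι → F) (hc : c l ≠ 0)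
    (hmax : ∀ k, c k ≠ 0 → d k ≤ d l) (t : ι → F[X]) :
    P d (n+1) (fun k => C (c k) + X * t k) ↔
    P (Function.update d l (d l - 1)) n
      (fun k => if k = l then C (c l) + X * t l else t k - C (c k / c l) * t l) := by
  have key : ∀ g : ι → F[X], ∀ u : F[X],
      (g l + ∑ k ∈ Finset.univ.erase l, C (c k / c l) * g k = X * u) →
      ∑ k, g k * (C (c k) + X * t k) =
       X * ∑ k, (Function.update g l u) k *
        (if k = l then C (c l) + X * t l else t k - C (c k / c l) * t l) := by
    intro g u hu
    rw [← Finset.add_sum_erase _ _ (Finset.mem_univ l), ← Finset.add_sum_erase _ _ (Finset.mem_univ l)]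
    simp only [Function.update_self, if_true]
    rw [mul_add X (u * _), ← mul_assoc X u, ← hu, add_mul, Finset.sum_mul, Finset.mul_sum, add_assoc,
      ← Finset.sum_add_distrib]
    congr 1
    refine Finset.sum_congr rfl fun k hk => ?_
    have hk := Finset.ne_of_mem_erase hk
    simp only [Function.update_of_ne hk, if_neg hk]
    have : C (c k) = C (c k / c l) * C (c l) := by
      rw [← C_mul, div_mul_cancel₀ _ hc]
    rw [this]; ring
  have hdeg : ∀ g : ι → F[X], (∀ k, k ≠ l → (g k).degree < d k) →
      (∑ k ∈ Finset.univ.erase l, C (c k / c l) * g k).degree < d l := by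
    intro g hg
    refine (Polynomial.degree_sum_le _ _).trans_lt ?_
    rw [Finset.sup_lt_iff (by exact WithBot.bot_lt_coe _)]
    intro k hk
    have hk := Finset.ne_of_mem_erase hk
    by_cases h0 : c k = 0
    · simp [h0]
    · rw [degree_C_mul (div_ne_zero h0 hc)]
      refine (hg k hk).trans_le ?_
      exact_mod_cast hmax k h0
  constructor
  · intro H g hg hd
    have hg' : ∀ k, k ≠ l → (g k).degree < d k := by
      intro k hk
      simpa [Function.update_of_ne hk] using hg k
    have hs := hdeg g hg'
    set s := ∑ k ∈ Finset.univ.erase l, C (c k / c l) * g k with hsdef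
    have h1 := key (Function.update g l (X * g l - s)) (g l) (by
      rw [Function.update_self, hsdef]
      rw [sub_add_eq_add_sub, sub_eq_iff_eq_add]
      congr 1
      exact Finset.sum_congr rfl (fun k hk => by
        rw [Function.update_of_ne (Finset.ne_of_mem_erase hk)]))
    rw [Function.update_idem, Function.update_eq_self] at h1
    have h2 := H (Function.update g l (X * g l - s)) (by
      intro k
      by_cases hk : k = l
      · subst hk
        rw [Function.update_self]
        refine (degree_sub_le _ _).trans_lt (max_lt ?_ hs)
        have := hg k
        rw [Function.update_self] at this
        rw [mul_comm, degree_mul_X]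
        rw [degree_lt_iff_coeff_zero] at this
        by_cases h0 : g k = 0
        · simp [h0]
        have h3 := hg k
        rw [Function.update_self, degree_eq_natDegree h0] at h3
        rw [degree_eq_natDegree h0]
        have h3 : (g k).natDegree < d k - 1 := by exact_mod_cast h3
        have : (g k).natDegree + 1 < d k := by omega
        exact_mod_cast this
      · rw [Function.update_of_ne hk]; exact hg' k hk) (by
      rw [h1, pow_succ']
      exact mul_dvd_mul_left _ hd)
    have h3 : ∀ k, k ≠ l → g k = 0 := by
      intro k hk
      have := congrFun h2 k
      rwa [Function.update_of_ne hk] at this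
    have h4 : s = 0 := Finset.sum_eq_zero fun k hk => by
      rw [h3 k (Finset.ne_of_mem_erase hk), mul_zero]
    have h5 := congrFun h2 l
    rw [Function.update_self, h4] at h5
    funext k
    by_cases hk : k = l
    · subst hk; simpa using h5
    · exact h3 k hk
  · intro H g hg hd
    have hs := hdeg g (fun k _ => hg k)
    have hX : X ∣ g l + ∑ k ∈ Finset.univ.erase l, C (c k / c l) * g k := by
      have h1 : X ∣ ∑ k, g k * (C (c k) + X * t k) :=
        (Dvd.intro_left (X ^ n) (by rw [pow_succ])).trans hd
      rw [X_dvd_iff] at h1 ⊢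
      rw [← Finset.add_sum_erase _ _ (Finset.mem_univ l)] at h1
      simp only [coeff_add, finsetSum_coeff, mul_coeff_zero, coeff_C_zero, coeff_X_zero, zero_mul, add_zero] at h1 ⊢
      have : c l * ((g l).coeff 0 + ∑ k ∈ Finset.univ.erase l, c k / c l * (g k).coeff 0) = 0 := by
        rw [← h1, mul_add, Finset.mul_sum]
        congr 1
        · ring
        · refine Finset.sum_congr rfl fun k _ => by field_simp
      exact (mul_eq_zero.1 this).resolve_left hc
    obtain ⟨u, hu⟩ := hX
    have h1 := key g u hu
    have h2 := H (Function.update g l u) (by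
      intro k
      by_cases hk : k = l
      · subst hk
        rw [Function.update_self, Function.update_self]
        by_cases h0 : u = 0
        · subst h0; rw [degree_zero]; exact WithBot.bot_lt_coe _
        have h3 := (degree_add_le _ _).trans_lt (max_lt (hg k) hs)
        rw [hu, mul_comm, degree_mul_X, degree_eq_natDegree h0] at h3
        rw [degree_eq_natDegree h0]
        have h3 : u.natDegree + 1 < d k := by exact_mod_cast h3
        have : u.natDegree < d k - 1 := by omega
        exact_mod_cast this
      · rw [Function.update_of_ne hk, Function.update_of_ne hk]; exact hg k) (by
      rw [h1, pow_succ'] at hd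
      exact (mul_dvd_mul_iff_left X_ne_zero).1 hd)
    have h3 : ∀ k, k ≠ l → g k = 0 := by
      intro k hk
      have := congrFun h2 k
      rwa [Function.update_of_ne hk] at this
    have h4 : u = 0 := by simpa using congrFun h2 l
    rw [Finset.sum_eq_zero (fun k hk => by
      rw [h3 k (Finset.ne_of_mem_erase hk), mul_zero]), h4] at hu
    funext k
    by_cases hk : k = l
    · subst hk; simpa using hu
    · exact h3 k hk

/-- If all constant terms vanish, not independent. -/
lemma not_P [Fintype F] (d : ι → ℕ) (N : ℕ) (hd : ∑ k, d k = N + 1) (f : ι → F[X])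
    (h : ∀ k, 0 < d k → (f k).coeff 0 = 0) : ¬ P d (N+1) f := by
  classical
  intro H
  let φ : ((k : ι) → (Fin (d k) → F)) → (Fin N → F) :=
    fun v i => (∑ k, toP (v k) * f k).coeff (i + 1)
  have hcard : Fintype.card (Fin N → F) < Fintype.card ((k : ι) → (Fin (d k) → F)) := by
    simp only [Fintype.card_pi, Finset.prod_const, Finset.card_univ, Fintype.card_fin,
      Finset.prod_pow_eq_pow_sum, hd]
    exact Nat.pow_lt_pow_right Fintype.one_lt_card (Nat.lt_succ_self N)
  obtain ⟨v, w, hne, hvw⟩ := Fintype.exists_ne_map_eq_of_card_lt φ hcard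
  apply hne
  have := H (fun k => toP (v k) - toP (w k)) (fun k => (degree_sub_le _ _).trans_lt
    (max_lt (toP_degree _) (toP_degree _))) (by
      rw [X_pow_dvd_iff]
      intro i hi
      simp only [sub_mul, Finset.sum_sub_distrib, coeff_sub]
      rcases i with _ | i
      · have : ∀ v : ((k : ι) → (Fin (d k) → F)), (∑ k, toP (v k) * f k).coeff 0 = 0 := by
          intro v
          simp only [finsetSum_coeff, mul_coeff_zero]
          refine Finset.sum_eq_zero fun k _ => ?_
          rcases Nat.eq_zero_or_pos (d k) with h0 | h0
          · rw [toP_coeff, dif_neg (by omega), zero_mul]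
          · rw [h k h0, mul_zero]
        rw [this, this, sub_zero]
      · exact sub_eq_zero.2 (congrFun hvw ⟨i, by omega⟩))
  funext k
  exact toP_injective (sub_eq_zero.1 (congrFun this k))

/-- Number of tails giving an independent family with constant terms `c`. -/
noncomputable def R (N : ℕ) (d : ι → ℕ) (c : ι → F) : ℕ :=
  Nat.card {t : ι → Fin N → F // P d (N+1) (fun k => C (c k) + X * toP (t k))}

/-- change of variables -/
def ev (N : ℕ) (l : ι) (a : ι → F) (p : (ι → F) × (ι → Fin N → F)) : ι → Fin (N+1) → F :=
  fun k => if k = l then (Fin.snoc (p.2 l) (p.1 l) : Fin (N+1) → F)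
    else (Fin.cons (p.1 k) (p.2 k) : Fin (N+1) → F) + a k • (Fin.snoc (p.2 l) (p.1 l) : Fin (N+1) → F)

lemma ev_bij [Fintype F] (N : ℕ) (l : ι) (a : ι → F) : Function.Bijective (ev N l a) := by
  classical
  rw [Fintype.bijective_iff_injective_and_card]
  constructor
  · rintro ⟨p, s⟩ ⟨p', s'⟩ h
    have hl := congrFun h l
    simp only [ev, if_true] at hl
    have hl1 := Fin.snoc_injective2 hl
    have hk : ∀ k, p k = p' k ∧ s k = s' k := by
      intro k
      by_cases hk : k = l
      · subst hk; exact ⟨hl1.2, hl1.1⟩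
      · have h1 := congrFun h k
        simp only [ev, if_neg hk] at h1
        rw [hl] at h1
        exact Fin.cons_injective2 (add_right_cancel h1)
    exact Prod.ext (funext fun k => (hk k).1) (funext fun k => (hk k).2)
  · simp only [Fintype.card_prod, Fintype.card_pi, Finset.prod_const, Finset.card_univ, Fintype.card_fin]
    rw [← mul_pow, pow_succ']

lemma R_step [Fintype F] (N : ℕ) (d : ι → ℕ) (l : ι) (hl : 0 < d l) (c : ι → F) (hc : c l ≠ 0)
    (hmax : ∀ k, c k ≠ 0 → d k ≤ d l) :
    R (N+1) d c = ∑ c' : ι → F, R N (Function.update d l (d l - 1)) (Function.update c' l (c l)) := by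
  classical
  unfold R
  rw [← Nat.card_sigma]
  refine Nat.card_congr (Equiv.trans ?_ (Equiv.subtypeProdEquivSigmaSubtype
    (fun (c' : ι → F) (t : ι → Fin N → F) => P (Function.update d l (d l - 1)) (N+1)
      (fun k => C (Function.update c' l (c l) k) + X * toP (t k)))))
  refine (Equiv.subtypeEquiv (Equiv.ofBijective _ (ev_bij N l (fun k => c k / c l))) ?_).symm
  rintro ⟨p, s⟩
  rw [Equiv.ofBijective_apply, P_step d (N+1) l hl c hc hmax]
  apply P_congr
  intro k _
  by_cases hk : k = l
  · subst hk
    simp only [if_true, Function.update_self, ev, toP_snoc]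
    exact ⟨- C (p k), by ring⟩
  · simp only [if_neg hk, Function.update_of_ne hk, ev, if_true]
    rw [← toP_sub_smul, add_sub_cancel_right, toP_cons, sub_self]
    exact dvd_zero _

/-- the normalized count -/
def rho (q : ℚ) (r : ℕ) : ℚ := ∏ i ∈ Finset.range (r - 1), (1 - (q ^ (i + 1))⁻¹)

lemma R_zero [Fintype F] (N : ℕ) (d : ι → ℕ) (c : ι → F) (hd : ∑ k, d k = N + 1)
    (hc : ∀ k, 0 < d k → c k = 0) : R N d c = 0 := by
  unfold R
  rw [Nat.card_eq_zero]
  left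
  constructor
  rintro ⟨t, ht⟩
  exact not_P d N hd _ (fun k hk => by simp [hc k hk]) ht

lemma sum_update (d : ι → ℕ) (l : ι) (hl : 0 < d l) (n : ℕ) (h : ∑ k, d k = n + 1) :
    ∑ k, Function.update d l (d l - 1) k = n := by
  rw [Finset.sum_update_of_mem (Finset.mem_univ l)]
  rw [← Finset.add_sum_erase _ _ (Finset.mem_univ l)] at h
  rw [← Finset.erase_eq]
  omega

lemma card_bad [Fintype F] (S : Finset ι) [DecidablePred (fun c : ι → F => ∀ k ∈ S, c k = 0)] :
    (Finset.univ.filter (fun c : ι → F => ∀ k ∈ S, c k = 0)).card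
      = Fintype.card F ^ (Fintype.card ι - S.card) := by
  have : (Finset.univ.filter (fun c : ι → F => ∀ k ∈ S, c k = 0))
      = Fintype.piFinset (fun k => if k ∈ S then {0} else Finset.univ) := by
    ext c
    simp only [Finset.mem_filter, Finset.mem_univ, true_and, Fintype.mem_piFinset]
    refine forall_congr' fun k => ?_
    by_cases hk : k ∈ S <;> simp [hk]
  rw [this, Fintype.card_piFinset]
  have : ∀ k, (if k ∈ S then ({0} : Finset F) else Finset.univ).card
      = if k ∈ S then 1 else Fintype.card F := by
    intro k; split_ifs <;> simp
  simp only [this, Finset.prod_ite, Finset.prod_const, one_pow, one_mul]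
  congr 1
  rw [Finset.filter_not, Finset.card_sdiff]
  simp

theorem R_eq [Fintype F] (N : ℕ) : ∀ (d : ι → ℕ) (c : ι → F), ∑ k, d k = N + 1 →
    (∃ k, 0 < d k ∧ c k ≠ 0) →
    (R N d c : ℚ) = (Fintype.card F : ℚ) ^ (N * Fintype.card ι) *
      rho (Fintype.card F) (Finset.univ.filter (fun k => 0 < d k)).card := by
  classical
  have hq : (Fintype.card F : ℚ) ≠ 0 := by exact_mod_cast Fintype.card_ne_zero
  induction N with
  | zero =>
    rintro d c hd ⟨l, hl, hc⟩
    have hz := sum_update d l hl 0 hd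
    rw [Finset.sum_eq_zero_iff] at hz
    have hz' : ∀ k, k ≠ l → d k = 0 := fun k hk => by
      have := hz k (Finset.mem_univ _)
      rwa [Function.update_of_ne hk] at this
    have h1 : (Finset.univ.filter (fun k => 0 < d k)) = {l} := by
      ext k
      simp only [Finset.mem_filter, Finset.mem_univ, true_and, Finset.mem_singleton]
      constructor
      · intro h; by_contra hk; have := hz' k hk; omega
      · rintro rfl; exact hl
    rw [h1]
    have h2 : R 0 d c = 1 := by
      unfold R
      have : ∀ t : ι → Fin 0 → F, P d (0+1) (fun k => C (c k) + X * toP (t k)) := by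
        intro t
        rw [P_step d 0 l hl c hc (fun k _ => by
          by_cases hk : k = l
          · rw [hk]
          · rw [hz' k hk]; omega)]
        intro g hg _
        funext k
        have := hg k
        rw [hz k (Finset.mem_univ _)] at this
        rw [Pi.zero_apply, ← degree_eq_bot]; simpa using this
      rw [Nat.card_congr (Equiv.subtypeUnivEquiv this)]
      simp
    simp [h2, rho]
  | succ N ih =>
    rintro d c hd ⟨l0, hl0, hc0⟩
    obtain ⟨l, hlm, hmax⟩ := Finset.exists_max_image (Finset.univ.filter (fun k => c k ≠ 0)) d
      ⟨l0, by simpa using hc0⟩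
    simp only [Finset.mem_filter, Finset.mem_univ, true_and] at hlm hmax
    have hl : 0 < d l := lt_of_lt_of_le hl0 (hmax l0 hc0)
    have hz := sum_update d l hl _ hd
    rw [R_step N d l hl c hlm hmax, Nat.cast_sum]
    rcases Nat.lt_or_ge 1 (d l) with h2 | h2
    · have hS : (Finset.univ.filter (fun k => 0 < Function.update d l (d l - 1) k))
          = (Finset.univ.filter (fun k => 0 < d k)) := by
        ext k
        simp only [Finset.mem_filter, Finset.mem_univ, true_and]
        by_cases hk : k = l
        · subst hk; rw [Function.update_self]; omega
        · rw [Function.update_of_ne hk]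
      rw [Finset.sum_congr rfl (fun c' _ => ih _ (Function.update c' l (c l)) hz
        ⟨l, by rw [Function.update_self]; omega, by rwa [Function.update_self]⟩)]
      rw [hS, Finset.sum_const, Finset.card_univ, Fintype.card_fun, nsmul_eq_mul]
      push_cast
      ring
    · have h1 : d l = 1 := by omega
      have hS : (Finset.univ.filter (fun k => 0 < Function.update d l (d l - 1) k))
          = (Finset.univ.filter (fun k => 0 < d k)).erase l := by
        ext k
        simp only [Finset.mem_filter, Finset.mem_univ, true_and, Finset.mem_erase]
        by_cases hk : k = l
        · subst hk; rw [Function.update_self]; simp [h1]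
        · rw [Function.update_of_ne hk]; simp [hk]
      set S := (Finset.univ.filter (fun k => 0 < d k)).erase l with hSdef
      have hSc : (Finset.univ.filter (fun k => 0 < d k)).card = S.card + 1 := by
        rw [hSdef, Finset.card_erase_add_one]; simpa using hl
      have hSne : 0 < S.card := by
        rw [Finset.card_pos, ← hS]
        by_contra hne
        rw [Finset.not_nonempty_iff_eq_empty, Finset.filter_eq_empty_iff] at hne
        rw [Finset.sum_eq_zero (fun k hk => by have := hne hk; omega)] at hz
        omega
      have hval : ∀ c' : ι → F, (R N (Function.update d l (d l - 1)) (Function.update c' l (c l)) : ℚ)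
          = if ∀ k ∈ S, c' k = 0 then 0 else
            (Fintype.card F : ℚ) ^ (N * Fintype.card ι) * rho (Fintype.card F) S.card := by
        intro c'
        split_ifs with h
        · rw [R_zero _ _ _ hz, Nat.cast_zero]
          intro k hk
          have hk' : k ∈ S := by rw [← hS]; simpa using hk
          rw [Function.update_of_ne (Finset.ne_of_mem_erase hk')]
          exact h k hk'
        · push Not at h
          obtain ⟨k, hk, hck⟩ := h
          rw [ih _ _ hz, hS]
          refine ⟨k, ?_, ?_⟩
          · rw [← hS] at hk; simpa using hk
          · rwa [Function.update_of_ne (Finset.ne_of_mem_erase hk)]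
      rw [Finset.sum_congr rfl (fun c' _ => hval c'), Finset.sum_ite, Finset.sum_const_zero, zero_add,
        Finset.sum_const, nsmul_eq_mul]
      have hcard : ((Finset.univ.filter (fun c' : ι → F => ¬ ∀ k ∈ S, c' k = 0)).card : ℚ)
          = (Fintype.card F : ℚ) ^ (Fintype.card ι) * (1 - ((Fintype.card F : ℚ) ^ S.card)⁻¹) := by
        have h3 := Finset.card_filter_add_card_filter_not (s := (Finset.univ : Finset (ι → F)))
          (fun c' : ι → F => ∀ k ∈ S, c' k = 0)
        rw [card_bad, Finset.card_univ, Fintype.card_fun] at h3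
        have h4 := congrArg (Nat.cast : ℕ → ℚ) h3
        push_cast at h4
        rw [pow_sub₀ _ hq (Finset.card_le_univ S)] at h4
        linear_combination h4
      rw [hcard, hSc]
      have hrho : rho (Fintype.card F) (S.card + 1)
          = rho (Fintype.card F) S.card * (1 - ((Fintype.card F : ℚ) ^ S.card)⁻¹) := by
        unfold rho
        obtain ⟨r, hr⟩ : ∃ r, S.card = r + 1 := ⟨S.card - 1, by omega⟩
        rw [hr, Nat.add_sub_cancel, Nat.add_sub_cancel, Finset.prod_range_succ]
      rw [hrho]
      ring

lemma total_eq [Fintype F] (N : ℕ) (d : ι → ℕ) :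
    Nat.card {f : ι → Fin (N+1) → F // P d (N+1) (fun k => toP (f k))} = ∑ c : ι → F, R N d c := by
  classical
  unfold R
  rw [← Nat.card_sigma]
  refine Nat.card_congr (Equiv.trans ?_ (Equiv.subtypeProdEquivSigmaSubtype
    (fun (c : ι → F) (t : ι → Fin N → F) => P d (N+1) (fun k => C (c k) + X * toP (t k)))))
  let e : (ι → F) × (ι → Fin N → F) ≃ (ι → Fin (N+1) → F) :=
    { toFun := fun p k => Fin.cons (p.1 k) (p.2 k)
      invFun := fun f => (fun k => f k 0, fun k => Fin.tail (f k))
      left_inv := fun p => by simp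
      right_inv := fun f => by simp }
  refine (Equiv.subtypeEquiv e ?_).symm
  rintro ⟨c, t⟩
  simp only [e, Equiv.coe_fn_mk, toP_cons]

lemma prod_aux (q : ℚ) (hq : q ≠ 0) (m : ℕ) :
    q ^ (m ^ 2) * ∏ i ∈ Finset.range m, (1 - (q ^ (i + 1))⁻¹) =
      ∏ i ∈ Finset.range m, (q ^ m - q ^ i) := by
  rw [← Finset.prod_range_reflect, sq, pow_mul, ← Finset.card_range m, ← Finset.prod_const,
    Finset.card_range, ← Finset.prod_mul_distrib]
  refine Finset.prod_congr rfl fun i hi => ?_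
  have hi := Finset.mem_range.1 hi
  have h : m - 1 - i + 1 + i = m := by omega
  have : q ^ m = q ^ (m - 1 - i + 1) * q ^ i := by rw [← pow_add, h]
  have h0 : q ^ (m - 1 - i + 1) ≠ 0 := pow_ne_zero _ hq
  rw [this]
  field_simp

lemma total_count [Fintype F] (m d n : ℕ) (hm : 0 < m) (hd : 0 < d) (hn : n = m * d) :
    Nat.card {f : Fin m → Fin n → F // P (fun _ => d) n (fun k => toP (f k))} =
      (∏ i ∈ Finset.range m, (Fintype.card F ^ m - Fintype.card F ^ i)) *
        Fintype.card F ^ (m ^ 2 * (d - 1)) := by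
  classical
  obtain ⟨N, rfl⟩ : ∃ N, n = N + 1 := ⟨n - 1, by have := Nat.mul_pos hm hd; omega⟩
  have hq : (Fintype.card F : ℚ) ≠ 0 := by exact_mod_cast Fintype.card_ne_zero
  have hq1 : 1 ≤ Fintype.card F := Fintype.card_pos
  have hsum : ∑ _k : Fin m, d = N + 1 := by simp [hn]
  rw [total_eq]
  have hval : ∀ c : Fin m → F, (R N (fun _ => d) c : ℚ) = if c = 0 then 0 else
      (Fintype.card F : ℚ) ^ (N * m) * rho (Fintype.card F) m := by
    intro c
    split_ifs with h
    · rw [R_zero _ _ _ hsum (fun k _ => by rw [h]; rfl), Nat.cast_zero]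
    · obtain ⟨k, hk⟩ := Function.ne_iff.1 h
      rw [R_eq N _ c hsum ⟨k, hd, hk⟩]
      simp [hd]
  have hcast : (((∏ i ∈ Finset.range m, (Fintype.card F ^ m - Fintype.card F ^ i)) : ℕ) : ℚ)
      = ∏ i ∈ Finset.range m, ((Fintype.card F : ℚ) ^ m - (Fintype.card F : ℚ) ^ i) := by
    rw [Nat.cast_prod]
    refine Finset.prod_congr rfl fun i hi => ?_
    rw [Nat.cast_sub (Nat.pow_le_pow_right hq1 (Finset.mem_range.1 hi).le)]
    push_cast; rfl
  have : ((∑ c : Fin m → F, R N (fun _ => d) c : ℕ) : ℚ) =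
      (((∏ i ∈ Finset.range m, (Fintype.card F ^ m - Fintype.card F ^ i)) *
        Fintype.card F ^ (m ^ 2 * (d - 1)) : ℕ) : ℚ) := by
    rw [Nat.cast_sum, Finset.sum_congr rfl (fun c _ => hval c), Nat.cast_mul, hcast,
      ← prod_aux _ hq]
    rw [Finset.sum_ite, Finset.sum_const_zero, zero_add, Finset.sum_const, nsmul_eq_mul,
      Finset.filter_ne', Finset.card_erase_of_mem (Finset.mem_univ _), Finset.card_univ, Fintype.card_fun,
      Fintype.card_fin, Nat.cast_sub (Nat.one_le_pow _ _ hq1)]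
    push_cast
    obtain ⟨m, rfl⟩ : ∃ r, m = r + 1 := ⟨m - 1, by omega⟩
    obtain ⟨d, rfl⟩ : ∃ r, d = r + 1 := ⟨d - 1, by omega⟩
    rw [Finset.prod_range_succ, rho, Nat.add_sub_cancel, Nat.add_sub_cancel]
    generalize ∏ i ∈ Finset.range m, (1 - ((Fintype.card F : ℚ) ^ (i + 1))⁻¹) = Z
    generalize (Fintype.card F : ℚ) = q at *
    have h1 : q ^ ((m+1)^2) * q ^ ((m+1)^2 * d) = q ^ (m+1) * q ^ (N * (m+1)) := by
      rw [← pow_add, ← pow_add]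
      congr 1
      have h3 : (N + 1) * (m + 1) = (m + 1) * (d + 1) * (m + 1) := by rw [hn]
      nlinarith [h3]
    have h0 : q ^ (m+1) ≠ 0 := pow_ne_zero _ hq
    calc (q ^ (m+1) - 1) * (q ^ (N * (m+1)) * Z)
        = (q ^ (m+1) * q ^ (N * (m+1))) * (Z * (1 - (q ^ (m+1))⁻¹)) := by field_simp
      _ = _ := by rw [← h1]; ring
  exact_mod_cast this

/-- the index bijection -/
def ie (m d : ℕ) : Fin d × Fin m ≃ Fin (m * d) :=
  finProdFinEquiv.trans (finCongr (Nat.mul_comm d m))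

lemma ie_val (m d : ℕ) (j : Fin d) (k : Fin m) : (ie m d (j, k) : ℕ) = k + m * j := by
  simp [ie, finProdFinEquiv]

/-- The matrix attached to a family. -/
noncomputable def Mat (m d : ℕ) (f : Fin m → Fin (m * d) → F) :
    Matrix (Fin (m * d)) (Fin (m * d)) F :=
  fun i c => (X ^ (((ie m d).symm c).1 : ℕ) * toP (f ((ie m d).symm c).2)).coeff i

lemma Mat_mulVec (m d : ℕ) (f : Fin m → Fin (m * d) → F) (v : Fin (m * d) → F) (i : Fin (m * d)) :
    (Mat m d f).mulVec v i = (∑ k, toP (fun j => v (ie m d (j, k))) * toP (f k)).coeff i := by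
  simp only [Matrix.mulVec, dotProduct, Mat]
  rw [← (ie m d).sum_comp, Fintype.sum_prod_type, Finset.sum_comm, finsetSum_coeff]
  refine Finset.sum_congr rfl fun k _ => ?_
  rw [toP, Finset.sum_mul, finsetSum_coeff]
  refine Finset.sum_congr rfl fun j _ => ?_
  rw [Equiv.symm_apply_apply, mul_assoc, coeff_C_mul, mul_comm]

lemma toP_coeff_self {N : ℕ} (g : F[X]) (h : g.degree < N) :
    toP (fun j : Fin N => g.coeff j) = g := by
  ext i
  rw [toP_coeff]
  split_ifs with hi
  · rfl
  · exact (((degree_lt_iff_coeff_zero _ _).1 h) i (by omega)).symm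

lemma Mat_isUnit (m d : ℕ) (f : Fin m → Fin (m * d) → F) :
    IsUnit (Mat m d f) ↔ P (fun _ => d) (m * d) (fun k => toP (f k)) := by
  rw [← Matrix.mulVec_injective_iff_isUnit]
  have hinj : Function.Injective (Mat m d f).mulVec ↔ ∀ v, (Mat m d f).mulVec v = 0 → v = 0 :=
    injective_iff_map_eq_zero (Matrix.mulVecLin (Mat m d f))
  rw [hinj]
  constructor
  · intro H g hg hdvd
    have hv := H (fun c => (g ((ie m d).symm c).2).coeff ((ie m d).symm c).1) (by
      funext i
      rw [Mat_mulVec]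
      simp only [Equiv.symm_apply_apply]
      rw [X_pow_dvd_iff] at hdvd
      rw [Finset.sum_congr rfl (fun k _ => by rw [toP_coeff_self (g k) (hg k)])]
      exact hdvd i i.2)
    funext k
    rw [← toP_coeff_self (g k) (hg k)]
    have : (fun j : Fin d => (g k).coeff j) = 0 := by
      funext j
      have := congrFun hv (ie m d (j, k))
      simpa using this
    rw [this]; simp [toP]
  · intro H v hv
    have := H (fun k => toP (fun j => v (ie m d (j, k)))) (fun k => toP_degree _) (by
      rw [X_pow_dvd_iff]
      intro i hi
      rw [← Mat_mulVec m d f v ⟨i, hi⟩, hv]; rfl)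
    funext c
    obtain ⟨⟨j, k⟩, rfl⟩ := (ie m d).surjective c
    have h1 := congrArg (fun p => coeff p j) (congrFun this k)
    simpa [toP_coeff] using h1

lemma Mat_apply (m d : ℕ) (f : Fin m → Fin (m * d) → F) (i c : Fin (m * d)) (j l : ℕ) (hl : l < m)
    (hc : (c : ℕ) = j * m + l) :
    Mat m d f i c = if h : j ≤ (i : ℕ) then f ⟨l, hl⟩ ⟨i - j, by omega⟩ else 0 := by
  have hj : j < d := by
    have h1 := c.2
    by_contra h
    have : m * d ≤ m * j := Nat.mul_le_mul_left m (by omega)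
    rw [mul_comm m j] at this
    omega
  have : c = ie m d (⟨j, hj⟩, ⟨l, hl⟩) := by
    apply Fin.ext
    rw [ie_val, hc]
    simp only
    ring
  rw [Mat, this, Equiv.symm_apply_apply, coeff_X_pow_mul']
  simp only
  split_ifs with h
  · rw [toP_coeff, dif_pos]
  · rfl

end BlockShift

/-- the number of invertible `md × md` matrices over `F_q` in which each
successive block of `m` columns is the first block of `m` columns shifted down by one
row (zeros filling the top) equals `γ_m(q) · q^{m²(d−1)}`, where
`γ_m(q) = (q^m − 1)(q^m − q)⋯(q^m − q^{m−1})`. -/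
theorem count_block_shift_invertible_matrices (F : Type*) [Field F] [Fintype F]
    (m d : ℕ) (hm : 0 < m) (hd : 0 < d) :
    Set.ncard {M : Matrix (Fin (m * d)) (Fin (m * d)) F | IsUnit M ∧
      ∃ a : ℕ → ℕ → F, ∀ (i c : Fin (m * d)) (j l : ℕ), l < m → (c : ℕ) = j * m + l →
        M i c = if j ≤ (i : ℕ) then a ((i : ℕ) - j) l else 0} =
      (∏ i ∈ Finset.range m, (Fintype.card F ^ m - Fintype.card F ^ i)) *
        Fintype.card F ^ (m ^ 2 * (d - 1)) := by
  classical
  rw [← BlockShift.total_count m d (m * d) hm hd rfl]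
  have hinj : Function.Injective (BlockShift.Mat (F := F) m d) := by
    intro f f' h
    funext l i
    have hlt : (l : ℕ) < m * d := lt_of_lt_of_le l.2 (Nat.le_mul_of_pos_right m hd)
    have h1 := congrFun (congrFun h i) ⟨l, hlt⟩
    rw [BlockShift.Mat_apply m d f i ⟨l, hlt⟩ 0 l l.2 (by simp),
      BlockShift.Mat_apply m d f' i ⟨l, hlt⟩ 0 l l.2 (by simp)] at h1
    simpa using h1
  have hset : {M : Matrix (Fin (m * d)) (Fin (m * d)) F | IsUnit M ∧
      ∃ a : ℕ → ℕ → F, ∀ (i c : Fin (m * d)) (j l : ℕ), l < m → (c : ℕ) = j * m + l →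
        M i c = if j ≤ (i : ℕ) then a ((i : ℕ) - j) l else 0} =
      BlockShift.Mat m d '' {f | BlockShift.P (fun _ => d) (m * d) (fun k => BlockShift.toP (f k))} := by
    ext M
    simp only [Set.mem_ofPred_eq, Set.mem_image]
    constructor
    · rintro ⟨hM, a, ha⟩
      have hMM : BlockShift.Mat m d (fun l i => a i l) = M := by
        ext i c
        have hc : (c : ℕ) = (c / m) * m + c % m := (Nat.div_add_mod' _ _).symm
        rw [BlockShift.Mat_apply m d _ i c (c / m) (c % m) (Nat.mod_lt _ hm) hc,
          ha i c (c / m) (c % m) (Nat.mod_lt _ hm) hc]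
        split_ifs <;> rfl
      refine ⟨_, ?_, hMM⟩
      rwa [← BlockShift.Mat_isUnit, hMM]
    · rintro ⟨f, hf, rfl⟩
      refine ⟨(BlockShift.Mat_isUnit m d f).2 hf,
        fun i l => if h : l < m ∧ i < m * d then f ⟨l, h.1⟩ ⟨i, h.2⟩ else 0, ?_⟩
      intro i c j l hl hc
      rw [BlockShift.Mat_apply m d f i c j l hl hc]
      split_ifs with h1
      · have h3 : l < m ∧ (i : ℕ) - j < m * d := ⟨hl, by omega⟩
        beta_reduce
        rw [dif_pos h3]
      · rfl
  rw [hset, Set.ncard_image_of_injective _ hinj]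
  rfl
end

section
/- Let T be a linear operator on an md-dimensional vector space V over F_q, where m, d are positive integers. The number of ordered m-tuples (α_1,…,α_m) ∈ V^m such that the span of {T^i α_j : 0 ≤ i ≤ d−1, 1 ≤ j ≤ m} is all of V equals γ_m(q) · σ(m,d;T). Equivalently, the probability that the order-d Krylov subspace generated by a uniformly random ordered m-tuple equals V is γ_m(q) · σ(m,d;T) / q^{m^2 d}. -/
theorem map_span_range_aux {F V : Type*} [Field F] [AddCommGroup V] [Module F V]
    (T : V →ₗ[F] V) {m : ℕ} (α : Fin m → V) (k : ℕ) :
    (Submodule.span F (Set.range α)).map (T ^ k) =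
      Submodule.span F (Set.range fun j => (T ^ k) (α j)) := by
  rw [Submodule.map_span, ← Set.range_comp]
  rfl

theorem iSup_map_aux {F V : Type*} [Field F] [AddCommGroup V] [Module F V]
    (T : V →ₗ[F] V) {m d : ℕ} (α : Fin m → V) :
    (⨆ i : Fin d, (Submodule.span F (Set.range α)).map (T ^ (i : ℕ))) =
      Submodule.span F (Set.range fun p : Fin d × Fin m => (T ^ (p.1 : ℕ)) (α p.2)) := by
  simp_rw [map_span_range_aux]
  rw [← Submodule.span_iUnion]
  congr 1
  ext x
  simp

theorem linInd_aux {F V : Type*} [Field F] [AddCommGroup V] [Module F V]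
    {m d : ℕ} (hdim : Module.finrank F V = m * d) (T : V →ₗ[F] V) (α : Fin m → V)
    (h : Submodule.span F
      (Set.range fun p : Fin d × Fin m => (T ^ (p.1 : ℕ)) (α p.2)) = ⊤) :
    LinearIndependent F (fun p : Fin d × Fin m => (T ^ (p.1 : ℕ)) (α p.2)) :=
  linearIndependent_of_top_le_span_of_card_eq_finrank h.ge
    (by simp [hdim, mul_comm])

theorem linInd_aux2 {F V : Type*} [Field F] [AddCommGroup V] [Module F V]
    {m d : ℕ} (hd : 0 < d) (hdim : Module.finrank F V = m * d) (T : V →ₗ[F] V) (α : Fin m → V)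
    (h : Submodule.span F
      (Set.range fun p : Fin d × Fin m => (T ^ (p.1 : ℕ)) (α p.2)) = ⊤) :
    LinearIndependent F α := by
  have := (linInd_aux hdim T α h).comp (fun j : Fin m => ((⟨0, hd⟩ : Fin d), j))
    (fun a b hab => by simpa using hab)
  simpa [Function.comp_def] using this

theorem split_aux {F V : Type*} [Field F] [AddCommGroup V] [Module F V]
    {m d : ℕ} (hd : 0 < d) (hdim : Module.finrank F V = m * d) (T : V →ₗ[F] V) (α : Fin m → V)
    (h : Submodule.span F
      (Set.range fun p : Fin d × Fin m => (T ^ (p.1 : ℕ)) (α p.2)) = ⊤) :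
    IsSplittingSubspace T m d (Submodule.span F (Set.range α)) := by
  refine ⟨?_, ?_, ?_⟩
  · simpa using finrank_span_eq_card (linInd_aux2 hd hdim T α h)
  · intro i
    refine ((linInd_aux hdim T α h).disjoint_span_image
      (s := {p | p.1 = i}) (t := {p | p.1 ≠ i}) ?_).mono ?_ ?_
    · rw [Set.disjoint_left]
      intro p hp hq
      exact hq hp
    · beta_reduce
      rw [map_span_range_aux]
      apply Submodule.span_mono
      rintro _ ⟨j, rfl⟩
      exact ⟨(i, j), rfl, rfl⟩
    · refine iSup₂_le fun k hk => ?_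
      beta_reduce
      rw [map_span_range_aux]
      apply Submodule.span_mono
      rintro _ ⟨j, rfl⟩
      exact ⟨(k, j), hk, rfl⟩
  · rw [iSup_map_aux, h]

theorem span_aux {F V : Type*} [Field F] [AddCommGroup V] [Module F V]
    [FiniteDimensional F V] {m : ℕ} (W : Submodule F V) (hW : Module.finrank F W = m)
    (s : Fin m → W) (hs : LinearIndependent F s) :
    Submodule.span F (Set.range fun j => (s j : V)) = W := by
  have h := hs.span_eq_top_of_card_eq_finrank' (by simp [hW])
  have h2 := congrArg (Submodule.map W.subtype) h
  rw [Submodule.map_span, ← Set.range_comp, Submodule.map_top, Submodule.range_subtype] at h2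
  exact h2

theorem count_aux (F V : Type*) [Field F] [Fintype F]
    [AddCommGroup V] [Module F V] [FiniteDimensional F V]
    (m d : ℕ) (hd : 0 < d) (hdim : Module.finrank F V = m * d)
    (T : V →ₗ[F] V) :
    Set.ncard {α : Fin m → V | Submodule.span F
        (Set.range fun p : Fin d × Fin m => (T ^ (p.1 : ℕ)) (α p.2)) = ⊤} =
      (∏ i ∈ Finset.range m, (Fintype.card F ^ m - Fintype.card F ^ i)) *
        splitCount T m d := by
  classical
  have : Finite V := Module.finite_of_finite F
  have : Finite (Submodule F V) := Finite.of_injective _ SetLike.coe_injective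
  let f : (Σ W : {W : Submodule F V | IsSplittingSubspace T m d W},
      {s : Fin m → W.1 // LinearIndependent F s}) →
      {α : Fin m → V | Submodule.span F
        (Set.range fun p : Fin d × Fin m => (T ^ (p.1 : ℕ)) (α p.2)) = ⊤} :=
    fun x => ⟨fun j => (x.2.1 j : V), by
      have h := x.1.2.2.2
      have h2 := iSup_map_aux (d := d) T (fun j => (x.2.1 j : V))
      rw [span_aux x.1.1 x.1.2.1 x.2.1 x.2.2] at h2
      exact h2.symm.trans h⟩
  have hf : Function.Bijective f := by
    constructor
    · rintro ⟨⟨W, hW⟩, ⟨s, hs⟩⟩ ⟨⟨W', hW'⟩, ⟨s', hs'⟩⟩ h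
      have h1 : (fun j => (s j : V)) = fun j => (s' j : V) := congrArg Subtype.val h
      have h2 : W = W' := by
        rw [← span_aux W hW.1 s hs, ← span_aux W' hW'.1 s' hs', h1]
      subst h2
      have h3 : s = s' := by
        funext j
        exact Subtype.ext (congrFun h1 j)
      subst h3
      rfl
    · rintro ⟨α, hα⟩
      refine ⟨⟨⟨Submodule.span F (Set.range α), split_aux hd hdim T α hα⟩,
        ⟨fun j => ⟨α j, Submodule.subset_span ⟨j, rfl⟩⟩, ?_⟩⟩, rfl⟩
      exact LinearIndependent.of_comp (Submodule.subtype _) (linInd_aux2 hd hdim T α hα)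
  have := Fintype.ofFinite {W : Submodule F V | IsSplittingSubspace T m d W}
  rw [← Nat.card_coe_set_eq, ← Nat.card_congr (Equiv.ofBijective f hf), Nat.card_sigma]
  rw [Finset.sum_congr rfl (g := fun _ =>
    ∏ i ∈ Finset.range m, (Fintype.card F ^ m - Fintype.card F ^ i))]
  · rw [Finset.sum_const, Finset.card_univ, ← Nat.card_eq_fintype_card, smul_eq_mul, mul_comm,
      Nat.card_coe_set_eq, splitCount]
  · intro W _
    rw [card_linearIndependent W.2.1.ge, W.2.1, Finset.prod_range]



/-- the number of `m`-tuples `(α₁,…,α_m) ∈ V^m` whose order-`d` Krylov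
subspace `span{Tⁱαⱼ}` is all of `V` equals `γ_m(q) · σ(m,d;T)`; equivalently, the
probability that a uniformly random `m`-tuple generates `V` is
`γ_m(q) · σ(m,d;T) / q^{m²d}`. -/
theorem krylov_generating_tuples_count (F V : Type*) [Field F] [Fintype F]
    [AddCommGroup V] [Module F V] [FiniteDimensional F V]
    (m d : ℕ) (hm : 0 < m) (hd : 0 < d) (hdim : Module.finrank F V = m * d)
    (T : V →ₗ[F] V) :
    Set.ncard {α : Fin m → V | Submodule.span F
        (Set.range fun p : Fin d × Fin m => (T ^ (p.1 : ℕ)) (α p.2)) = ⊤} =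
      (∏ i ∈ Finset.range m, (Fintype.card F ^ m - Fintype.card F ^ i)) *
        splitCount T m d ∧
    (Set.ncard {α : Fin m → V | Submodule.span F
        (Set.range fun p : Fin d × Fin m => (T ^ (p.1 : ℕ)) (α p.2)) = ⊤} : ℚ) /
      (Nat.card (Fin m → V) : ℚ) =
      ((∏ i ∈ Finset.range m, (Fintype.card F ^ m - Fintype.card F ^ i)) *
        splitCount T m d : ℚ) / (Fintype.card F : ℚ) ^ (m ^ 2 * d) := by
  have hc := count_aux F V m d hd hdim T
  refine ⟨hc, ?_⟩
  have hV : Nat.card (Fin m → V) = Fintype.card F ^ (m ^ 2 * d) := by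
    rw [Nat.card_fun, Module.natCard_eq_pow_finrank (K := F), hdim, Nat.card_eq_fintype_card,
      Nat.card_eq_fintype_card, Fintype.card_fin, ← pow_mul]
    congr 1
    ring
  rw [hc, hV, Nat.cast_mul, Nat.cast_pow]
end
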